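/- arXiv:math/0701265 — 9 statements merged into one kernel-verified Lean document; each statement's English description precedes it below -/
import Mathlib

section
/- Let α ≥ 2 and β₁, β₂ > 0, and let x, y : ℤ → ℂ be sequences satisfying |x_n| ≤ β₁/(|n|+1)^α and |y_n| ≤ β₂/(|n|+1)^α for all n ∈ ℤ. Then for every n ∈ ℤ the series Σ_{k∈ℤ} x_k y_{n-k} converges absolutely, and the convolution satisfies |(x*y)_n| ≤ C · β₁β₂/(|n|+1)^α, where C = 2(2α+1)/(α-1). -/
open scoped Real
open Complex Filter

/-- Convolution of two two-sided sequences of complex numbers. -/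
noncomputable def conv (x y : ℤ → ℂ) : ℤ → ℂ := fun n => ∑' k : ℤ, x k * y (n - k)

/-- `convPow x k` is the `k`-fold convolution power `x^{*k}`;
`x^{*0}` is the unit (Kronecker delta at `0`). -/
noncomputable def convPow (x : ℤ → ℂ) : ℕ → ℤ → ℂ
  | 0 => fun n => if n = 0 then 1 else 0
  | k + 1 => conv (convPow x k) x

/-- Membership in `X_β`: decay `|x_n| ≤ β/(|n|+1)^2` and the symmetry `x_{-n} = conj x_n`. -/
def memX (β : ℝ) (x : ℤ → ℂ) : Prop :=
  (∀ n : ℤ, ‖x n‖ ≤ β / (|(n : ℝ)| + 1) ^ 2) ∧ (∀ n : ℤ, x (-n) = starRingEnd ℂ (x n))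

lemma aux_tele (A : ℕ → ℝ) (hA : ∀ j, A (j+1) ≤ A j) (h0 : Tendsto A atTop (nhds 0)) :
    HasSum (fun j => A j - A (j+1)) (A 0) := by
  rw [hasSum_iff_tendsto_nat_of_nonneg (fun j => sub_nonneg.2 (hA j))]
  simp_rw [Finset.sum_range_sub']
  simpa using (tendsto_const_nhds (x := A 0)).sub h0

noncomputable def auxA (α : ℝ) (j : ℕ) : ℝ :=
  if 3 ≤ α then 4 / ((j:ℝ) + 2) ^ 2 else 4 / ((j:ℝ) + 2)

noncomputable def auxT (α : ℝ) (j : ℕ) : ℝ := ((j:ℝ) + 1) ^ (1 - α) / (α - 1)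

noncomputable def auxg (α : ℝ) : ℤ → ℝ
  | Int.ofNat 0 => 1
  | Int.ofNat (j+1) => auxA α j - auxA α (j+1)
  | Int.negSucc j => auxT α j - auxT α (j+1)

lemma auxA_bound (α : ℝ) (hα : 2 ≤ α) (j : ℕ) (r : ℝ) (hr : 0 < r)
    (h : r ≤ 2 / ((j:ℝ) + 2 + 1/2)) : r ^ α ≤ auxA α j - auxA α (j+1) := by
  have hj : (0:ℝ) ≤ j := Nat.cast_nonneg j
  have h1 : r ≤ 1 := h.trans (by rw [div_le_one (by positivity)]; linarith)
  unfold auxA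
  split_ifs with h3
  · calc r ^ α ≤ r ^ (3:ℝ) := Real.rpow_le_rpow_of_exponent_ge hr h1 h3
      _ = r ^ 3 := by norm_cast
      _ ≤ (2 / ((j:ℝ) + 2 + 1/2)) ^ 3 := by gcongr
      _ ≤ _ := by
        push_cast
        rw [div_pow, div_sub_div _ _ (by positivity) (by positivity),
          div_le_div_iff₀ (by positivity) (by positivity), ← sub_nonneg]
        ring_nf
        positivity
  · calc r ^ α ≤ r ^ (2:ℝ) := Real.rpow_le_rpow_of_exponent_ge hr h1 hα
      _ = r ^ 2 := by norm_cast
      _ ≤ (2 / ((j:ℝ) + 2 + 1/2)) ^ 2 := by gcongr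
      _ ≤ _ := by
        push_cast
        rw [div_pow, div_sub_div _ _ (by positivity) (by positivity),
          div_le_div_iff₀ (by positivity) (by positivity), ← sub_nonneg]
        ring_nf
        positivity

lemma auxT_bound (α : ℝ) (hα : 2 ≤ α) (j : ℕ) :
    (1 / ((j:ℝ) + 2)) ^ α ≤ auxT α j - auxT α (j+1) := by
  have hj : (0:ℝ) ≤ j := Nat.cast_nonneg j
  have hb := one_add_mul_self_le_rpow_one_add (s := 1 / ((j:ℝ)+1)) (p := α - 1)
    (by have : 0 ≤ 1 / ((j:ℝ)+1) := by positivity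
        linarith) (by linarith)
  have e : 1 + 1 / ((j:ℝ)+1) = (j+2) / (j+1) := by field_simp; ring
  rw [e, Real.div_rpow (by positivity) (by positivity)] at hb
  unfold auxT
  push_cast
  have e2 : (j:ℝ) + 1 + 1 = j + 2 := by ring
  rw [e2, Real.div_rpow (by positivity) (by positivity), Real.one_rpow, ← sub_div,
    le_div_iff₀ (by linarith)]
  have n1 : (1:ℝ) - α = -(α - 1) := by ring
  rw [n1, Real.rpow_neg (by positivity), Real.rpow_neg (by positivity)]
  have hP : 0 < ((j:ℝ)+1) ^ (α-1) := by positivity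
  have hQ : 0 < ((j:ℝ)+2) ^ (α-1) := by positivity
  have hR : ((j:ℝ)+2) ^ α = (j+2) ^ (α-1) * (j+2) := by
    rw [Real.rpow_sub_one (by positivity)]; field_simp
  rw [hR]
  set P := ((j:ℝ)+1) ^ (α-1)
  set Q := ((j:ℝ)+2) ^ (α-1)
  have h2 : (α - 1) / (j+2) ≤ (α-1) * (1/((j:ℝ)+1)) := by
    rw [div_eq_mul_one_div]
    have : 1 / ((j:ℝ)+2) ≤ 1/((j:ℝ)+1) := by gcongr; norm_num
    exact mul_le_mul_of_nonneg_left this (by linarith)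
  have h3 : (α - 1) / (j+2) + 1 ≤ Q / P := by linarith
  have h4 := mul_le_mul_of_nonneg_right h3 (inv_pos.2 hQ).le
  have e5 : Q / P * Q⁻¹ = P⁻¹ := by field_simp
  have e6 : ((α - 1) / (j+2) + 1) * Q⁻¹ = 1 / (Q * (j+2)) * (α-1) + Q⁻¹ := by
    field_simp
  linarith

lemma auxA_anti (α : ℝ) (j : ℕ) : auxA α (j+1) ≤ auxA α j := by
  unfold auxA
  push_cast
  split_ifs
  all_goals
    gcongr
    linarith

lemma auxT_anti (α : ℝ) (hα : 2 ≤ α) (j : ℕ) : auxT α (j+1) ≤ auxT α j := by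
  have := auxT_bound α hα j
  have : 0 ≤ (1 / ((j:ℝ) + 2)) ^ α := by positivity
  linarith

lemma auxA_lim (α : ℝ) : Tendsto (auxA α) atTop (nhds 0) := by
  have h : Tendsto (fun j : ℕ => (j:ℝ) + 2) atTop atTop :=
    tendsto_atTop_add_const_right _ _ tendsto_natCast_atTop_atTop
  unfold auxA
  split_ifs
  · exact Tendsto.div_atTop tendsto_const_nhds ((tendsto_pow_atTop (by norm_num)).comp h)
  · exact Tendsto.div_atTop tendsto_const_nhds h

lemma auxT_lim (α : ℝ) (hα : 2 ≤ α) : Tendsto (auxT α) atTop (nhds 0) := by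
  have h : Tendsto (fun j : ℕ => (j:ℝ) + 1) atTop atTop :=
    tendsto_atTop_add_const_right _ _ tendsto_natCast_atTop_atTop
  have h2 := ((tendsto_rpow_neg_atTop (y := α - 1) (by linarith)).comp h).div_const (α - 1)
  simp only [zero_div] at h2
  refine h2.congr fun j => ?_
  simp [auxT]

lemma auxg_nonneg (α : ℝ) (hα : 2 ≤ α) (k : ℤ) : 0 ≤ auxg α k := by
  match k with
  | Int.ofNat 0 => exact zero_le_one
  | Int.ofNat (j+1) => exact sub_nonneg.2 (auxA_anti α j)
  | Int.negSucc j => exact sub_nonneg.2 (auxT_anti α hα j)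

lemma auxg_sum (α : ℝ) (hα : 2 ≤ α) : ∃ S, HasSum (auxg α) S ∧ S ≤ (2 * α + 1) / (α - 1) := by
  have hA := aux_tele _ (auxA_anti α) (auxA_lim α)
  have hT := aux_tele _ (auxT_anti α hα) (auxT_lim α hα)
  have h1 : HasSum (fun n : ℕ => auxg α n) (auxA α 0 + 1) := by
    have := (hasSum_nat_add_iff (f := fun n : ℕ => auxg α n) (g := auxA α 0) 1).1 hA
    simpa [auxg] using this
  have h2 : HasSum (fun n : ℕ => auxg α (-(n+1 : ℤ))) (auxT α 0) := by
    convert hT using 2 with j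
    rw [← Int.negSucc_eq]; rfl
  refine ⟨_, HasSum.of_nat_of_neg_add_one h1 h2, ?_⟩
  have ha : 0 < α - 1 := by linarith
  have hT0 : auxT α 0 = 1 / (α - 1) := by simp [auxT]
  have hA0 : auxA α 0 ≤ 1 + 2 / (α - 1) := by
    unfold auxA
    split_ifs with h
    · have : 0 < 2 / (α - 1) := by positivity
      norm_num; linarith
    · have : 1 ≤ 2 / (α - 1) := by rw [le_div_iff₀ ha]; linarith
      norm_num; linarith
  have e : (2 * α + 1) / (α - 1) = 2 + 3 / (α - 1) := by field_simp; ring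
  have e2 : 3 / (α - 1) = 2 / (α - 1) + 1 / (α - 1) := by ring
  rw [hT0, e, e2]
  linarith

lemma aux_mid (α : ℝ) (hα : 2 ≤ α) (i j : ℕ) (h : i ≤ j) :
    (((i:ℝ) + j + 3) / ((i + 2) * (j + 2))) ^ α ≤ auxA α i - auxA α (i+1) := by
  apply auxA_bound α hα
  · positivity
  · obtain ⟨d, rfl⟩ := Nat.exists_eq_add_of_le h
    push_cast
    rw [div_le_div_iff₀ (by positivity) (by positivity), ← sub_nonneg]
    have hi : (0:ℝ) ≤ i := Nat.cast_nonneg i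
    have hd : (0:ℝ) ≤ d := Nat.cast_nonneg d
    nlinarith [mul_nonneg hi hd]

lemma aux_neg (α : ℝ) (hα : 2 ≤ α) (N : ℕ) (j : ℕ) :
    (((N:ℝ) + 1) / ((j + 2) * (N + j + 2))) ^ α ≤ auxT α j - auxT α (j+1) := by
  refine le_trans ?_ (auxT_bound α hα j)
  apply Real.rpow_le_rpow (by positivity) _ (by linarith)
  rw [div_le_div_iff₀ (by positivity) (by positivity)]
  have hj : (0:ℝ) ≤ j := Nat.cast_nonneg j
  have hd : (0:ℝ) ≤ N := Nat.cast_nonneg N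
  nlinarith [mul_nonneg hj hd]

lemma aux_half (α : ℝ) (hα : 2 ≤ α) (a b : ℤ) (hn : 0 ≤ a + b) (hab : a ≤ b) :
    ((|((a + b : ℤ) : ℝ)| + 1) / ((|(a:ℝ)| + 1) * (|(b:ℝ)| + 1))) ^ α ≤ auxg α a := by
  match a with
  | Int.ofNat 0 =>
    have : |(b:ℝ)| + 1 ≠ 0 := by positivity
    simp [auxg, this]
  | Int.ofNat (i+1) =>
    obtain ⟨c, rfl⟩ : ∃ c : ℕ, b = Int.ofNat (c+1) := by
      refine ⟨b.toNat - 1, ?_⟩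
      simp only [Int.ofNat_eq_natCast] at *
      omega
    have hic : i ≤ c := by
      simp only [Int.ofNat_eq_natCast] at *
      omega
    have := aux_mid α hα i c hic
    change _ ≤ auxA α i - auxA α (i+1)
    convert this using 2
    simp only [Int.ofNat_eq_natCast]
    push_cast
    rw [abs_of_nonneg (by positivity), abs_of_nonneg (by positivity), abs_of_nonneg (by positivity)]
    congr 1 <;> ring
  | Int.negSucc j =>
    obtain ⟨N, rfl⟩ : ∃ N : ℕ, b = N + (j + 1) := by
      refine ⟨(Int.negSucc j + b).toNat, ?_⟩
      rw [Int.toNat_of_nonneg hn, Int.negSucc_eq]; ring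
    have := aux_neg α hα N j
    change _ ≤ auxT α j - auxT α (j+1)
    convert this using 2
    rw [Int.negSucc_eq]
    push_cast
    rw [abs_neg, abs_of_nonneg (a := (j:ℝ) + 1) (by positivity),
      abs_of_nonneg (a := (N:ℝ) + (j + 1)) (by positivity)]
    have e : -((j:ℝ) + 1) + (N + (j + 1)) = N := by ring
    rw [e, abs_of_nonneg (by positivity)]
    congr 1; ring

lemma aux_key (α : ℝ) (hα : 2 ≤ α) (a b : ℤ) (hn : 0 ≤ a + b) :
    ((|((a + b : ℤ) : ℝ)| + 1) / ((|(a:ℝ)| + 1) * (|(b:ℝ)| + 1))) ^ α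
      ≤ auxg α a + auxg α b := by
  have h1 := auxg_nonneg α hα a
  have h2 := auxg_nonneg α hα b
  rcases le_total a b with h | h
  · linarith [aux_half α hα a b hn h]
  · have := aux_half α hα b a (by linarith) h
    rw [add_comm b a, mul_comm] at this
    linarith

lemma aux_dom (α : ℝ) (hα : 2 ≤ α) (n : ℤ) : ∃ G : ℤ → ℝ, ∃ S, HasSum G S ∧
    S ≤ 2 * (2 * α + 1) / (α - 1) ∧
    ∀ k : ℤ, ((|(n : ℝ)| + 1) / ((|(k:ℝ)| + 1) * (|((n - k : ℤ):ℝ)| + 1))) ^ α ≤ G k := by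
  obtain ⟨S, hS, hle⟩ := auxg_sum α hα
  have hle2 : S + S ≤ 2 * (2 * α + 1) / (α - 1) := by rw [mul_div_assoc]; linarith
  rcases le_total 0 n with hn | hn
  · refine ⟨fun k => auxg α k + auxg α (n - k), S + S,
      hS.add ((Equiv.subLeft n).hasSum_iff.2 hS), hle2, fun k => ?_⟩
    have := aux_key α hα k (n - k) (by linarith)
    rwa [add_sub_cancel] at this
  · refine ⟨fun k => auxg α (-k) + auxg α (k - n), S + S,
      ((Equiv.neg ℤ).hasSum_iff.2 hS).add ((Equiv.subRight n).hasSum_iff.2 hS), hle2,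
      fun k => ?_⟩
    have := aux_key α hα (-k) (k - n) (by linarith)
    have e : -k + (k - n) = -n := by ring
    have e2 : n - k = -(k - n) := by ring
    rw [e] at this
    rw [e2]
    rw [Int.cast_neg, Int.cast_neg, abs_neg, abs_neg] at this
    rwa [Int.cast_neg, abs_neg]

/-- Lemma `lem:szac`: if `|x_n| ≤ β₁/(|n|+1)^α` and `|y_n| ≤ β₂/(|n|+1)^α`
with `α ≥ 2`, then the convolution series converges absolutely and
`|(x*y)_n| ≤ C β₁ β₂ /(|n|+1)^α` with `C = 2(2α+1)/(α-1)`. -/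
theorem convolution_estimate (α β₁ β₂ : ℝ) (hα : 2 ≤ α) (hβ₁ : 0 < β₁) (hβ₂ : 0 < β₂)
    (x y : ℤ → ℂ)
    (hx : ∀ n : ℤ, ‖x n‖ ≤ β₁ / (|(n : ℝ)| + 1) ^ α)
    (hy : ∀ n : ℤ, ‖y n‖ ≤ β₂ / (|(n : ℝ)| + 1) ^ α) :
    ∀ n : ℤ, Summable (fun k : ℤ => ‖x k * y (n - k)‖) ∧
      ‖conv x y n‖ ≤ (2 * (2 * α + 1) / (α - 1)) * (β₁ * β₂) / (|(n : ℝ)| + 1) ^ α := by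
  intro n
  obtain ⟨G, S, hG, hS, hk⟩ := aux_dom α hα n
  have hpos : 0 < (|(n : ℝ)| + 1) ^ α := by positivity
  have hb : ∀ k : ℤ, ‖x k * y (n - k)‖ ≤ (β₁ * β₂) / (|(n : ℝ)| + 1) ^ α * G k := by
    intro k
    have h1 : ‖x k * y (n - k)‖ ≤ (β₁ / (|(k : ℝ)| + 1) ^ α) *
        (β₂ / (|((n - k : ℤ) : ℝ)| + 1) ^ α) := by
      rw [norm_mul]
      exact mul_le_mul (hx k) (hy (n - k)) (norm_nonneg _) (by positivity)
    refine h1.trans ?_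
    have h2 := mul_le_mul_of_nonneg_left (hk k)
      (show 0 ≤ (β₁ * β₂) / (|(n : ℝ)| + 1) ^ α by positivity)
    refine le_trans (le_of_eq ?_) h2
    rw [Real.div_rpow (by positivity) (by positivity),
      Real.mul_rpow (by positivity) (by positivity)]
    field_simp
  have hG2 := hG.mul_left ((β₁ * β₂) / (|(n : ℝ)| + 1) ^ α)
  refine ⟨Summable.of_nonneg_of_le (fun _ => norm_nonneg _) hb hG2.summable, ?_⟩
  refine (tsum_of_norm_bounded hG2 hb).trans ?_
  calc _ ≤ (β₁ * β₂) / (|(n : ℝ)| + 1) ^ α * (2 * (2 * α + 1) / (α - 1)) := by gcongr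
    _ = _ := by ring
end

section
/- Let α ≥ 2 and β > 0, and let x : ℤ → ℂ satisfy |x_n| ≤ β/(|n|+1)^α for all n ∈ ℤ. Then for every integer k ≥ 1 and every n ∈ ℤ, the k-fold convolution power satisfies |(x^{*k})_n| ≤ C^{k-1} β^k/(|n|+1)^α, where C = 2(2α+1)/(α-1). -/
open scoped Real
open Complex Filter

/-- Majorant. -/
noncomputable def gAux (k : ℤ) : ℝ := if k = 0 then 0 else 1 / (|(k : ℝ)| + 1) ^ 2

lemma gAux_nonneg (k : ℤ) : 0 ≤ gAux k := by
  unfold gAux; split_ifs <;> positivity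

lemma u_range (n : ℕ) : ∑ i ∈ Finset.range n, 1 / ((i : ℝ) + 2) ^ 2 ≤ 2 / 3 - 1 / ((n : ℝ) + 3 / 2) := by
  induction n with
  | zero => norm_num
  | succ m ih =>
    rw [Finset.sum_range_succ]
    have h : 1 / ((m : ℝ) + 2) ^ 2 ≤ 1 / ((m : ℝ) + 3 / 2) - 1 / ((m : ℝ) + 1 + 3 / 2) := by
      have hm : (0 : ℝ) ≤ m := by positivity
      rw [div_sub_div _ _ (by positivity) (by positivity), div_le_div_iff₀ (by positivity) (by positivity)]
      nlinarith
    push_cast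
    linarith

lemma u_hasSum : ∃ s : ℝ, s ≤ 2 / 3 ∧ HasSum (fun i : ℕ => 1 / ((i : ℝ) + 2) ^ 2) s := by
  have h0 : ∀ i : ℕ, 0 ≤ 1 / ((i : ℝ) + 2) ^ 2 := fun i => by positivity
  have h1 : ∀ n : ℕ, ∑ i ∈ Finset.range n, 1 / ((i : ℝ) + 2) ^ 2 ≤ 2 / 3 := fun n => by
    have := u_range n
    have h : 0 ≤ 1 / ((n : ℝ) + 3 / 2) := by positivity
    linarith
  exact ⟨_, Real.tsum_le_of_sum_range_le h0 h1, (summable_of_sum_range_le h0 h1).hasSum⟩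

lemma gAux_hasSum : ∃ s : ℝ, s ≤ 4 / 3 ∧ HasSum gAux s := by
  obtain ⟨s, hs, h⟩ := u_hasSum
  refine ⟨s + s, by linarith, HasSum.of_nat_of_neg_add_one ?_ ?_⟩
  · rw [← hasSum_nat_add_iff' 1]
    have e : s - ∑ i ∈ Finset.range 1, gAux ((i : ℕ) : ℤ) = s := by simp [gAux]
    rw [e]
    have e2 : (fun n : ℕ => gAux ((n + 1 : ℕ) : ℤ)) = fun i : ℕ => 1 / ((i : ℝ) + 2) ^ 2 := by
      funext i
      have : ((i : ℤ) + 1) ≠ 0 := by omega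
      have h2 : |(i : ℝ) + 1| = i + 1 := abs_of_nonneg (by positivity)
      simp only [gAux]
      push_cast
      rw [if_neg this, h2]
      congr 2; ring
    rw [e2]
    exact h
  · suffices e2 : (fun n : ℕ => gAux (-((n : ℤ) + 1))) = fun i : ℕ => 1 / ((i : ℝ) + 2) ^ 2 by
      rw [e2]; exact h
    funext i
    have : -((i : ℤ) + 1) ≠ 0 := by omega
    have h2 : |(i : ℝ) + 1| = i + 1 := abs_of_nonneg (by positivity)
    simp only [gAux]
    push_cast
    rw [if_neg this, abs_neg, h2]
    congr 2; ring

lemma q_bound (t : ℝ) (ht : 0 ≤ t) : (3 / 4 : ℝ) ^ t ≤ 4 / (4 + t) := by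
  rw [Real.rpow_def_of_pos (by norm_num)]
  have h1 : Real.log (3 / 4) ≤ -(1 / 4) := by
    have := Real.log_le_sub_one_of_pos (show (0 : ℝ) < 3 / 4 by norm_num)
    linarith
  have h2 : Real.exp (Real.log (3 / 4) * t) ≤ Real.exp (-(t / 4)) := by
    apply Real.exp_le_exp.2; nlinarith
  refine h2.trans ?_
  rw [Real.exp_neg, inv_le_comm₀ (Real.exp_pos _) (by positivity)]
  have := Real.add_one_le_exp (t / 4)
  rw [inv_div]
  linarith

lemma term_bound (α : ℝ) (hα : 2 ≤ α) (n k : ℤ) :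
    1 / (|(k : ℝ)| + 1) ^ α * (1 / (|((n - k : ℤ) : ℝ)| + 1) ^ α) ≤
      1 / (|(n : ℝ)| + 1) ^ α * ((if k = 0 then 1 else 0) + (if k = n then 1 else 0) +
        2 * (3 / 4 : ℝ) ^ (α - 2) * (gAux k + gAux (n - k))) := by
  have hq : 0 ≤ 2 * (3 / 4 : ℝ) ^ (α - 2) * (gAux k + gAux (n - k)) := by
    have := gAux_nonneg k
    have := gAux_nonneg (n - k)
    positivity
  by_cases hk : k = 0
  · subst hk
    simp only [sub_zero, Int.cast_zero, abs_zero, zero_add, Real.one_rpow, if_true, div_one, one_mul] at hq ⊢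
    apply le_mul_of_one_le_right (by positivity)
    split_ifs <;> linarith
  by_cases hkn : k = n
  · subst hkn
    simp only [sub_self, Int.cast_zero, abs_zero, zero_add, Real.one_rpow, if_true, div_one, mul_one] at hq ⊢
    apply le_mul_of_one_le_right (by positivity)
    split_ifs <;> linarith
  have hnk : n - k ≠ 0 := by omega
  simp only [gAux, if_neg hk, if_neg hkn, if_neg hnk, zero_add]
  have e1 : (1 : ℝ) ≤ |(k : ℝ)| := by exact_mod_cast Int.one_le_abs hk
  have e2 : (1 : ℝ) ≤ |((n - k : ℤ) : ℝ)| := by exact_mod_cast Int.one_le_abs hnk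
  have e3 : |(n : ℝ)| ≤ |(k : ℝ)| + |((n - k : ℤ) : ℝ)| := by
    have := abs_add_le (k : ℝ) ((n - k : ℤ) : ℝ)
    rwa [show (k : ℝ) + ((n - k : ℤ) : ℝ) = n by push_cast; ring] at this
  have e4 := abs_nonneg (n : ℝ)
  generalize |(k : ℝ)| = a at *
  generalize |((n - k : ℤ) : ℝ)| = b at *
  generalize |(n : ℝ)| = c at *
  have ha : 0 < a + 1 := by linarith
  have hb : 0 < b + 1 := by linarith
  have hc : 0 < c + 1 := by linarith
  set r := (c + 1) / ((a + 1) * (b + 1)) with hr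
  have hr0 : 0 < r := by positivity
  have hr1 : r ≤ 3 / 4 := by
    rw [hr, div_le_div_iff₀ (by positivity) (by norm_num)]
    nlinarith [mul_nonneg (sub_nonneg.2 e1) (sub_nonneg.2 e2)]
  have hr2 : r ≤ 1 / (a + 1) + 1 / (b + 1) := by
    rw [hr, div_add_div _ _ ha.ne' hb.ne']
    apply div_le_div_of_nonneg_right _ (by positivity)
    linarith
  have hr3 : r ^ 2 ≤ 2 * (1 / (a + 1) ^ 2 + 1 / (b + 1) ^ 2) := by
    have h1 : r ^ 2 ≤ (1 / (a + 1) + 1 / (b + 1)) ^ 2 := by gcongr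
    have h2 : 1 / (a + 1) ^ 2 = (1 / (a + 1)) ^ 2 := by rw [div_pow, one_pow]
    have h3 : 1 / (b + 1) ^ 2 = (1 / (b + 1)) ^ 2 := by rw [div_pow, one_pow]
    rw [h2, h3]
    nlinarith [sq_nonneg (1 / (a + 1) - 1 / (b + 1))]
  have hr4 : r ^ α = r ^ (α - 2) * r ^ 2 := by
    rw [← Real.rpow_natCast r 2, ← Real.rpow_add hr0]
    congr 1; push_cast; ring
  have hr5 : r ^ (α - 2) ≤ (3 / 4 : ℝ) ^ (α - 2) :=
    Real.rpow_le_rpow hr0.le hr1 (by linarith)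
  have hr6 : 1 / (a + 1) ^ α * (1 / (b + 1) ^ α) = 1 / (c + 1) ^ α * r ^ α := by
    have := (Real.rpow_pos_of_pos ha α).ne'
    have := (Real.rpow_pos_of_pos hb α).ne'
    have := (Real.rpow_pos_of_pos hc α).ne'
    rw [hr, Real.div_rpow hc.le (by positivity), Real.mul_rpow ha.le hb.le]
    field_simp
  rw [hr6, hr4]
  apply mul_le_mul_of_nonneg_left _ (by positivity)
  calc r ^ (α - 2) * r ^ 2 ≤ (3 / 4 : ℝ) ^ (α - 2) * (2 * (1 / (a + 1) ^ 2 + 1 / (b + 1) ^ 2)) := by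
        gcongr
    _ = _ := by ring

lemma key_bound (α s : ℝ) (hα : 2 ≤ α) (hs : s ≤ 4 / 3) :
    1 + 1 + 2 * (3 / 4 : ℝ) ^ (α - 2) * (s + s) ≤ 2 * (2 * α + 1) / (α - 1) := by
  have hq := q_bound (α - 2) (by linarith)
  have hq0 : 0 ≤ (3 / 4 : ℝ) ^ (α - 2) := by positivity
  generalize (3 / 4 : ℝ) ^ (α - 2) = q at *
  have h1 : 2 * q * (s + s) ≤ 16 / 3 * (4 / (4 + (α - 2))) := by
    have : q * s ≤ q * (4 / 3) := mul_le_mul_of_nonneg_left hs hq0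
    linarith
  have h2 : 1 + 1 + 16 / 3 * (4 / (4 + (α - 2))) ≤ 2 * (2 * α + 1) / (α - 1) := by
    have p1 : 0 < α - 1 := by linarith
    have p2 : 0 < 4 + (α - 2) := by linarith
    have e : 1 + 1 + 16 / 3 * (4 / (4 + (α - 2))) = (2 * (4 + (α - 2)) + 64 / 3) / (4 + (α - 2)) := by
      rw [add_div, mul_div_assoc, div_self p2.ne']; ring
    rw [e, div_le_div_iff₀ p2 p1]
    nlinarith [sq_nonneg (α - 2 - 4 / 3)]
  linarith

lemma conv_bound (α A B : ℝ) (hα : 2 ≤ α) (hA : 0 ≤ A) (hB : 0 ≤ B) (y x : ℤ → ℂ)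
    (hy : ∀ n : ℤ, ‖y n‖ ≤ A / (|(n : ℝ)| + 1) ^ α)
    (hx : ∀ n : ℤ, ‖x n‖ ≤ B / (|(n : ℝ)| + 1) ^ α) (n : ℤ) :
    ‖conv y x n‖ ≤ (2 * (2 * α + 1) / (α - 1)) * A * B / (|(n : ℝ)| + 1) ^ α := by
  obtain ⟨s, hs, h⟩ := gAux_hasSum
  have h' : HasSum (fun k : ℤ => gAux (n - k)) s := by
    have h2 : HasSum (gAux ∘ (Equiv.subLeft n)) s := (Equiv.hasSum_iff (Equiv.subLeft n)).2 h
    have e : gAux ∘ (Equiv.subLeft n) = fun k : ℤ => gAux (n - k) := by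
      funext k
      simp only [Function.comp_apply, Equiv.subLeft_apply]
    rw [e] at h2
    exact h2
  have e0 : HasSum (fun k : ℤ => if k = 0 then (1 : ℝ) else 0) 1 := hasSum_ite_eq 0 1
  have e1 : HasSum (fun k : ℤ => if k = n then (1 : ℝ) else 0) 1 := hasSum_ite_eq n 1
  have H : HasSum (fun k : ℤ => A * B * (1 / (|(n : ℝ)| + 1) ^ α *
      ((if k = 0 then 1 else 0) + (if k = n then 1 else 0) +
        2 * (3 / 4 : ℝ) ^ (α - 2) * (gAux k + gAux (n - k)))))
      (A * B * (1 / (|(n : ℝ)| + 1) ^ α * (1 + 1 + 2 * (3 / 4 : ℝ) ^ (α - 2) * (s + s)))) :=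
    (((e0.add e1).add ((h.add h').mul_left _)).mul_left _).mul_left _
  have hb : ∀ k : ℤ, ‖y k * x (n - k)‖ ≤ A * B * (1 / (|(n : ℝ)| + 1) ^ α *
      ((if k = 0 then 1 else 0) + (if k = n then 1 else 0) +
        2 * (3 / 4 : ℝ) ^ (α - 2) * (gAux k + gAux (n - k)))) := by
    intro k
    rw [norm_mul]
    calc ‖y k‖ * ‖x (n - k)‖ ≤ (A / (|(k : ℝ)| + 1) ^ α) * (B / (|((n - k : ℤ) : ℝ)| + 1) ^ α) :=
          mul_le_mul (hy k) (hx _) (norm_nonneg _) (by positivity)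
      _ = A * B * (1 / (|(k : ℝ)| + 1) ^ α * (1 / (|((n - k : ℤ) : ℝ)| + 1) ^ α)) := by ring
      _ ≤ _ := mul_le_mul_of_nonneg_left (term_bound α hα n k) (by positivity)
  have h3 : ‖conv y x n‖ ≤ _ := tsum_of_norm_bounded H hb
  refine h3.trans ?_
  have key := key_bound α s hα hs
  calc A * B * (1 / (|(n : ℝ)| + 1) ^ α * (1 + 1 + 2 * (3 / 4 : ℝ) ^ (α - 2) * (s + s)))
      ≤ A * B * (1 / (|(n : ℝ)| + 1) ^ α * (2 * (2 * α + 1) / (α - 1))) :=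
        mul_le_mul_of_nonneg_left (mul_le_mul_of_nonneg_left key (by positivity)) (by positivity)
    _ = _ := by ring

/-- iterated convolution-power estimate
`|(x^{*k})_n| ≤ C^{k-1} β^k /(|n|+1)^α` with `C = 2(2α+1)/(α-1)`. -/
theorem convPow_estimate (α β : ℝ) (hα : 2 ≤ α) (hβ : 0 < β)
    (x : ℤ → ℂ) (hx : ∀ n : ℤ, ‖x n‖ ≤ β / (|(n : ℝ)| + 1) ^ α) :
    ∀ k : ℕ, 1 ≤ k → ∀ n : ℤ,
      ‖convPow x k n‖ ≤ (2 * (2 * α + 1) / (α - 1)) ^ (k - 1) * β ^ k / (|(n : ℝ)| + 1) ^ α := by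
  intro k hk
  induction k, hk using Nat.le_induction with
  | base =>
    intro n
    have : convPow x 1 n = x n := by
      simp only [convPow, conv]
      rw [tsum_eq_single 0 (fun k hk => by simp [hk])]
      simp
    rw [this]
    simpa using hx n
  | succ k hk ih =>
    intro n
    have hC : 0 ≤ 2 * (2 * α + 1) / (α - 1) := div_nonneg (by linarith) (by linarith)
    have := conv_bound α _ β hα (by positivity) hβ.le _ x ih hx n
    refine this.trans (le_of_eq ?_)
    obtain ⟨m, rfl⟩ : ∃ m, k = m + 1 := ⟨k - 1, by omega⟩
    simp only [Nat.add_sub_cancel]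
    ring
end

section
/- Let β₁, β₂ > 0 and let x ∈ X_{β₁}, y ∈ X_{β₂}. Then for every n ∈ ℤ the convolution (x*y)_n is well defined, satisfies (x*y)_{-n} = conj((x*y)_n), and |(x*y)_n| ≤ 10·β₁β₂/(|n|+1)²; that is, x*y ∈ X_{10β₁β₂}. -/
open scoped Real
open Complex Filter

noncomputable def wgt (k : ℤ) : ℝ := 1 / (|(k : ℝ)| + 1) ^ 2

theorem wgt_hasSum : HasSum wgt (π ^ 2 / 6 + (π ^ 2 / 6 - 1)) := by
  have h1 : HasSum (fun n : ℕ => 1 / ((n : ℝ) + 1) ^ 2) (π ^ 2 / 6) := by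
    have := (hasSum_nat_add_iff' 1).2 hasSum_zeta_two
    simpa using this
  have h2 : HasSum (fun n : ℕ => 1 / ((n : ℝ) + 1 + 1) ^ 2) (π ^ 2 / 6 - 1) := by
    have := (hasSum_nat_add_iff' 1).2 h1
    simpa using this
  refine HasSum.of_nat_of_neg_add_one ?_ ?_
  · refine h1.congr_fun ?_
    intro n
    simp [wgt]
  · refine h2.congr_fun ?_
    intro n
    have : |(((-((n : ℤ) + 1) : ℤ)) : ℝ)| = (n : ℝ) + 1 := by
      push_cast
      rw [abs_neg, abs_of_nonneg (by positivity)]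
    simp only [wgt, this]

theorem wgt_tsum_le : ∑' k, wgt k ≤ 5 / 2 := by
  rw [wgt_hasSum.tsum_eq]
  nlinarith [Real.pi_lt_d2, Real.pi_pos]

theorem wgt_mul_le (n k : ℤ) :
    wgt k * wgt (n - k) ≤ 2 / (|(n : ℝ)| + 1) ^ 2 * (wgt k + wgt (n - k)) := by
  unfold wgt
  have h : |(n : ℝ)| ≤ |(k : ℝ)| + |((n - k : ℤ) : ℝ)| := by
    have := abs_add_le (k : ℝ) ((n - k : ℤ) : ℝ)
    push_cast at this ⊢
    simpa using this
  have ha : 0 < |(k : ℝ)| + 1 := by positivity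
  have hb : 0 < |((n - k : ℤ) : ℝ)| + 1 := by positivity
  have hN : 0 < |(n : ℝ)| + 1 := by positivity
  have hle : |(n : ℝ)| + 1 ≤ (|(k : ℝ)| + 1) + (|((n - k : ℤ) : ℝ)| + 1) := by linarith
  generalize |(k : ℝ)| + 1 = a at *
  generalize |((n - k : ℤ) : ℝ)| + 1 = b at *
  generalize |(n : ℝ)| + 1 = N at *
  have e1 : 1 / a ^ 2 * (1 / b ^ 2) = 1 / (a ^ 2 * b ^ 2) := by field_simp
  have e2 : 2 / N ^ 2 * (1 / a ^ 2 + 1 / b ^ 2)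
      = (2 * (a ^ 2 + b ^ 2) / N ^ 2) * (1 / (a ^ 2 * b ^ 2)) := by
    field_simp
    ring
  rw [e1, e2]
  refine le_mul_of_one_le_left (by positivity) ?_
  rw [one_le_div (by positivity)]
  nlinarith [sq_nonneg (a - b)]

theorem wgt_shift_hasSum (n : ℤ) : HasSum (fun k => wgt (n - k)) (∑' k, wgt k) := by
  have h := wgt_hasSum.summable.hasSum
  rw [← (Equiv.subLeft n).hasSum_iff] at h
  exact h

/-- for `x ∈ X_{β₁}`, `y ∈ X_{β₂}` the convolution is well defined,
has the conjugation symmetry, and `x*y ∈ X_{10 β₁ β₂}`. -/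
theorem conv_mem_X (β₁ β₂ : ℝ) (hβ₁ : 0 < β₁) (hβ₂ : 0 < β₂)
    (x y : ℤ → ℂ) (hx : memX β₁ x) (hy : memX β₂ y) :
    (∀ n : ℤ, Summable (fun k : ℤ => ‖x k * y (n - k)‖)) ∧ memX (10 * (β₁ * β₂)) (conv x y) := by
  have hb : ∀ n k : ℤ, ‖x k * y (n - k)‖ ≤
      (β₁ * β₂) * (2 / (|(n : ℝ)| + 1) ^ 2 * (wgt k + wgt (n - k))) := by
    intro n k
    have h1 : ‖x k‖ ≤ β₁ * wgt k := by
      simpa [wgt, div_eq_mul_inv] using hx.1 k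
    have h2 : ‖y (n - k)‖ ≤ β₂ * wgt (n - k) := by
      simpa [wgt, div_eq_mul_inv] using hy.1 (n - k)
    rw [norm_mul]
    calc ‖x k‖ * ‖y (n - k)‖ ≤ (β₁ * wgt k) * (β₂ * wgt (n - k)) :=
          mul_le_mul h1 h2 (norm_nonneg _) ((norm_nonneg _).trans h1)
      _ = (β₁ * β₂) * (wgt k * wgt (n - k)) := by ring
      _ ≤ _ := mul_le_mul_of_nonneg_left (wgt_mul_le n k) (by positivity)
  have hs : ∀ n : ℤ, HasSum
      (fun k => (β₁ * β₂) * (2 / (|(n : ℝ)| + 1) ^ 2 * (wgt k + wgt (n - k))))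
      ((β₁ * β₂) * (2 / (|(n : ℝ)| + 1) ^ 2 * (∑' k, wgt k + ∑' k, wgt k))) := fun n =>
    ((wgt_hasSum.summable.hasSum.add (wgt_shift_hasSum n)).mul_left _).mul_left _
  refine ⟨fun n => Summable.of_nonneg_of_le (fun _ => norm_nonneg _) (hb n) (hs n).summable,
    fun n => ?_, fun n => ?_⟩
  · refine (tsum_of_norm_bounded (hs n) (hb n)).trans ?_
    have e : 10 * (β₁ * β₂) / (|(n : ℝ)| + 1) ^ 2
        = (β₁ * β₂) * (2 / (|(n : ℝ)| + 1) ^ 2 * (5 / 2 + 5 / 2)) := by ring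
    rw [e]
    have := wgt_tsum_le
    gcongr
  · unfold conv
    rw [Complex.conj_tsum, ← (Equiv.neg ℤ).tsum_eq]
    refine tsum_congr fun k => ?_
    rw [map_mul, ← hx.2, ← hy.2]
    simp only [Equiv.neg_apply]
    congr 2
    ring
end

section
/- Let β > 0, K > 0, τ > 0, and c ∈ X_β. Then for every n ∈ ℤ the series Σ_{k=0}^∞ ((-1)^k/(2k+1)!) (c^{*(2k+1)})_n e^{-inτ} converges absolutely, and moreover (K/τ)·Σ_{k=0}^∞ (1/(2k+1)!) |(c^{*(2k+1)})_n| ≤ (K/τ) · sinh(10β)/(10(|n|+1)²). -/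
open scoped Real
open Complex Filter

noncomputable def ww (n : ℤ) : ℝ := 1 / (|(n : ℝ)| + 1) ^ 2

lemma ww_pos (n : ℤ) : 0 < ww n := by unfold ww; positivity

lemma ww_hasSum : HasSum ww (π ^ 2 / 6 + (π ^ 2 / 6 - 1)) := by
  have h1 : HasSum (fun n : ℕ => 1 / ((n : ℝ) + 1) ^ 2) (π ^ 2 / 6) := by
    have := (hasSum_nat_add_iff' 1).mpr hasSum_zeta_two
    simpa using this
  have h2 : HasSum (fun n : ℕ => 1 / ((n : ℝ) + 1 + 1) ^ 2) (π ^ 2 / 6 - 1) := by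
    have := (hasSum_nat_add_iff' 1).mpr h1
    simpa using this
  apply HasSum.of_nat_of_neg_add_one
  · convert h1 using 2 with n
    simp [ww]
  · convert h2 using 2 with n
    have : |((-((n : ℤ) + 1) : ℤ) : ℝ)| = (n : ℝ) + 1 := by
      push_cast
      rw [abs_neg, abs_of_nonneg (by positivity)]
    unfold ww
    rw [this]

lemma ww_tsum : ∑' n, ww n ≤ 5 / 2 := by
  rw [ww_hasSum.tsum_eq]
  nlinarith [Real.pi_lt_d2, Real.pi_pos]

lemma ww_mul (n k : ℤ) : ww k * ww (n - k) ≤ 2 * ww n * (ww k + ww (n - k)) := by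
  have h : |(n : ℝ)| ≤ |(k : ℝ)| + |((n - k : ℤ) : ℝ)| := by
    have := abs_add_le (k : ℝ) ((n - k : ℤ) : ℝ)
    push_cast at this ⊢
    simpa using this
  unfold ww
  have hk := abs_nonneg (k : ℝ)
  have hm := abs_nonneg ((n - k : ℤ) : ℝ)
  have hn := abs_nonneg (n : ℝ)
  generalize |((n - k : ℤ) : ℝ)| = m at *
  generalize |(k : ℝ)| = a at *
  generalize |(n : ℝ)| = b at *
  have e : 2 * (1 / (b + 1) ^ 2) * (1 / (a + 1) ^ 2 + 1 / (m + 1) ^ 2) =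
      (2 * ((a + 1) ^ 2 + (m + 1) ^ 2)) / ((b + 1) ^ 2 * ((a + 1) ^ 2 * (m + 1) ^ 2)) := by
    field_simp
    ring
  have e2 : 1 / (a + 1) ^ 2 * (1 / (m + 1) ^ 2) =
      (b + 1) ^ 2 / ((b + 1) ^ 2 * ((a + 1) ^ 2 * (m + 1) ^ 2)) := by
    field_simp
  rw [e, e2]
  gcongr
  nlinarith [sq_nonneg (a - m)]

lemma ww_shift (n : ℤ) : HasSum (fun k => ww (n - k)) (∑' k, ww k) := by
  have h := ww_hasSum.summable.hasSum
  rw [← (Equiv.subLeft n).hasSum_iff] at h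
  exact h

lemma ww_conv (n : ℤ) : Summable (fun k => ww k * ww (n - k)) ∧
    ∑' k, ww k * ww (n - k) ≤ 10 * ww n := by
  have hs := ((ww_hasSum.summable.hasSum).add (ww_shift n)).mul_left (2 * ww n)
  have h1 : Summable (fun k => ww k * ww (n - k)) :=
    Summable.of_nonneg_of_le (fun k => (mul_pos (ww_pos _) (ww_pos _)).le) (ww_mul n) hs.summable
  refine ⟨h1, (hasSum_le (ww_mul n) h1.hasSum hs).trans ?_⟩
  nlinarith [ww_tsum, ww_pos n]

lemma convPow_bound (β : ℝ) (hβ : 0 < β) (c : ℤ → ℂ) (hc : memX β c) (k : ℕ) :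
    ∀ n, ‖convPow c (k + 1) n‖ ≤ 10 ^ k * β ^ (k + 1) * ww n := by
  have hc' : ∀ n, ‖c n‖ ≤ β * ww n := fun n => by
    simpa [ww, div_eq_mul_inv] using hc.1 n
  induction k with
  | zero =>
    intro n
    have : convPow c (0 + 1) n = c n := by
      simp only [convPow, conv]
      rw [tsum_eq_single 0]
      · simp
      · intro b hb
        simp [hb]
    rw [this]
    simpa using hc' n
  | succ k ih =>
    intro n
    have hs := ((ww_conv n).1.hasSum).mul_left (10 ^ k * β ^ (k + 1) * β)
    have : ‖convPow c (k + 1 + 1) n‖ ≤ _ := tsum_of_norm_bounded hs (fun j => by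
      rw [norm_mul]
      calc _ ≤ (10 ^ k * β ^ (k + 1) * ww j) * (β * ww (n - j)) := by
            gcongr
            · exact mul_nonneg (by positivity) (ww_pos _).le
            · exact ih j
            · exact hc' _
        _ = _ := by ring)
    refine this.trans ?_
    calc _ ≤ 10 ^ k * β ^ (k + 1) * β * (10 * ww n) := by
          gcongr
          exact (ww_conv n).2
      _ = _ := by ring

/-- absolute convergence of the sine series on Fourier coefficients and the
estimate `(K/τ) Σ (1/(2k+1)!) |(c^{*(2k+1)})_n| ≤ (K/τ) sinh(10β)/(10(|n|+1)²)`. -/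
theorem sine_series_estimate (β K τ : ℝ) (hβ : 0 < β) (hK : 0 < K) (hτ : 0 < τ)
    (c : ℤ → ℂ) (hc : memX β c) :
    ∀ n : ℤ,
      Summable (fun k : ℕ =>
        ‖((-1) ^ k / (Nat.factorial (2 * k + 1) : ℂ)) * convPow c (2 * k + 1) n *
          Complex.exp (-(Complex.I * n * τ))‖) ∧
      (K / τ) * ∑' k : ℕ, (1 / (Nat.factorial (2 * k + 1) : ℝ)) * ‖convPow c (2 * k + 1) n‖ ≤
        (K / τ) * Real.sinh (10 * β) / (10 * (|(n : ℝ)| + 1) ^ 2) := by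
  intro n
  have hS := (Real.hasSum_sinh (10 * β)).mul_left (ww n / 10)
  have hb : ∀ k : ℕ, (1 / (Nat.factorial (2 * k + 1) : ℝ)) * ‖convPow c (2 * k + 1) n‖ ≤
      ww n / 10 * ((10 * β) ^ (2 * k + 1) / (Nat.factorial (2 * k + 1) : ℝ)) := fun k => by
    calc _ ≤ (1 / (Nat.factorial (2 * k + 1) : ℝ)) *
          (10 ^ (2 * k) * β ^ (2 * k + 1) * ww n) := by
          gcongr
          exact convPow_bound β hβ c hc (2 * k) n
      _ = _ := by
        rw [mul_pow, pow_succ (10 : ℝ) (2 * k)]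
        ring
  have hs : Summable (fun k : ℕ =>
      (1 / (Nat.factorial (2 * k + 1) : ℝ)) * ‖convPow c (2 * k + 1) n‖) :=
    Summable.of_nonneg_of_le (fun k => by positivity) hb hS.summable
  constructor
  · convert hs using 2 with k
    have he : ‖Complex.exp (-(Complex.I * n * τ))‖ = 1 := by
      rw [Complex.norm_exp]
      simp
    rw [norm_mul, norm_mul, he]
    simp
  · have h := hasSum_le hb hs.hasSum hS
    have hKt : 0 ≤ K / τ := by positivity
    refine (mul_le_mul_of_nonneg_left h hKt).trans (le_of_eq ?_)
    unfold ww
    field_simp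
end

section
/- Let K > 0, τ > 0, and let x : ℝ → ℝ be a 2π-periodic C¹ function whose sequence of Fourier coefficients c (i.e. c_n = (1/2π)∫₀^{2π} x(t) e^{-int} dt) belongs to X. If x satisfies x'(t) = -(K/τ)·sin(x(t-τ)) for all t ∈ ℝ, then for every n ∈ ℤ: i n c_n = -(K/τ) Σ_{k=0}^∞ ((-1)^k/(2k+1)!) (c^{*(2k+1)})_n e^{-inτ}. -/
open scoped Real
open Complex Filter

noncomputable def fcoef (f : ℝ → ℂ) (n : ℤ) : ℂ :=
  ((1 / (2 * π) : ℝ) : ℂ) * ∫ t in (0 : ℝ)..(2 * π), f t * Complex.exp (-(Complex.I * n * t))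

lemma norm_fexp (n : ℤ) (t : ℝ) : ‖Complex.exp (-(Complex.I * n * t))‖ = 1 := by
  have : -(Complex.I * n * t) = ((-(n * t) : ℝ) : ℂ) * Complex.I := by push_cast; ring
  rw [this, Complex.norm_exp_ofReal_mul_I]

lemma fcoef_hasSum {ι : Type} [Countable ι] (F : ι → ℝ → ℂ) (f : ℝ → ℂ) (b : ι → ℝ)
    (hb : Summable b) (hF : ∀ i, Continuous (F i)) (hbd : ∀ i t, ‖F i t‖ ≤ b i)
    (hs : ∀ t, HasSum (fun i => F i t) (f t)) (n : ℤ) :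
    HasSum (fun i => fcoef (F i) n) (fcoef f n) := by
  unfold fcoef
  apply HasSum.mul_left
  refine intervalIntegral.hasSum_integral_of_dominated_convergence (fun i _ => b i)
    (fun i => ?_) (fun i => ?_) ?_ ?_ ?_
  · apply Continuous.aestronglyMeasurable
    have := hF i
    fun_prop
  · refine Eventually.of_forall fun t _ => ?_
    rw [norm_mul, norm_fexp, mul_one]; exact hbd i t
  · exact Eventually.of_forall fun _ _ => hb
  · exact intervalIntegrable_const
  · exact Eventually.of_forall fun t _ => (hs t).mul_right _

lemma fcoef_one (n : ℤ) : fcoef (fun _ => 1) n = if n = 0 then 1 else 0 := by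
  unfold fcoef
  have hpi : (π : ℂ) ≠ 0 := by exact_mod_cast Real.pi_ne_zero
  split_ifs with h
  · subst h
    simp
    field_simp
  · have hn : -(Complex.I * n) ≠ 0 := by
      simp [h]
    have e : ∀ t : ℝ, (1 : ℂ) * Complex.exp (-(Complex.I * n * t))
        = Complex.exp (-(Complex.I * n) * t) := by intro t; ring_nf
    simp_rw [e]
    rw [integral_exp_mul_complex hn]
    have : Complex.exp (-(Complex.I * n) * ((2 * π : ℝ) : ℂ)) = 1 := by
      rw [Complex.exp_eq_one_iff]
      exact ⟨-n, by push_cast; ring⟩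
    rw [this]; simp

lemma fcoef_mul_exp (f : ℝ → ℂ) (a : ℂ) (k n : ℤ) :
    fcoef (fun t => f t * (a * Complex.exp (Complex.I * k * t))) n = a * fcoef f (n - k) := by
  unfold fcoef
  rw [mul_left_comm, ← intervalIntegral.integral_const_mul a]
  congr 1
  refine intervalIntegral.integral_congr fun t _ => ?_
  dsimp only
  rw [show -(Complex.I * ((n - k : ℤ) : ℂ) * t)
    = Complex.I * k * t + -(Complex.I * n * t) by push_cast; ring, Complex.exp_add]
  ring

lemma fourier_pointwise (x : ℝ → ℝ) (hx : Continuous x) (hper : Function.Periodic x (2 * π))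
    (hc : Summable (fcoef (fun t => (x t : ℂ)))) (t : ℝ) :
    HasSum (fun k => fcoef (fun t => (x t : ℂ)) k * Complex.exp (Complex.I * k * t)) (x t : ℂ) := by
  have : Fact (0 < 2 * π) := ⟨Real.two_pi_pos⟩
  have hpi : (π : ℂ) ≠ 0 := by exact_mod_cast Real.pi_ne_zero
  have hp : Function.Periodic (fun t => (x t : ℂ)) (2 * π) := fun t => by simp [hper t]
  have hcont : Continuous hp.lift := by
    apply Continuous.quotient_liftOn'
    fun_prop
  let f : C(AddCircle (2 * π), ℂ) := ⟨hp.lift, hcont⟩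
  have hco : ∀ k, fourierCoeff f k = fcoef (fun t => (x t : ℂ)) k := by
    intro k
    rw [fourierCoeff_eq_intervalIntegral f k 0, fcoef, zero_add, Complex.real_smul]
    congr 2
    ext s
    rw [fourier_coe_apply, smul_eq_mul, mul_comm]
    congr 2
    push_cast
    field_simp
  have h := has_pointwise_sum_fourier_series_of_summable (f := f)
    (by rw [show fourierCoeff f = _ from funext hco]; exact hc) (t : AddCircle (2 * π))
  have hft : f (t : AddCircle (2 * π)) = (x t : ℂ) := rfl
  rw [hft] at h
  convert h using 1
  ext k
  rw [hco, fourier_coe_apply, smul_eq_mul]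
  congr 2
  push_cast
  field_simp

lemma summable_of_memX {β : ℝ} {c : ℤ → ℂ} (h : memX β c) : Summable (fun n => ‖c n‖) := by
  have hs : Summable (fun n : ℤ => |β| * (1 / (n : ℝ) ^ 2)) :=
    (Real.summable_one_div_int_pow.mpr one_lt_two).mul_left _
  refine hs.of_norm_bounded_eventually ?_
  have : ∀ᶠ n : ℤ in cofinite, n ≠ 0 :=
    (Set.finite_singleton (0 : ℤ)).compl_mem_cofinite
  filter_upwards [this] with n hn
  rw [norm_norm]
  refine (h.1 n).trans ?_
  have hn' : (0:ℝ) < |(n : ℝ)| := by simpa using hn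
  rw [mul_one_div, ← sq_abs (n : ℝ)]
  gcongr
  · exact le_abs_self _
  · linarith

lemma fcoef_pow (x : ℝ → ℝ) (hx : Continuous x) (c : ℤ → ℂ) (hc : Summable (fun n => ‖c n‖))
    (hbd : ∀ t : ℝ, ‖(x t : ℂ)‖ ≤ ∑' n, ‖c n‖)
    (hs : ∀ t : ℝ, HasSum (fun k => c k * Complex.exp (Complex.I * k * t)) (x t : ℂ)) (m : ℕ) :
    ∀ n, fcoef (fun t => (x t : ℂ) ^ m) n = convPow c m n := by
  induction m with
  | zero => intro n; simpa [convPow] using fcoef_one n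
  | succ m ih =>
    intro n
    have := fcoef_hasSum (fun (k : ℤ) t => (x t : ℂ) ^ m * (c k * Complex.exp (Complex.I * k * t)))
      (fun t => (x t : ℂ) ^ (m + 1)) (fun k => (∑' n, ‖c n‖) ^ m * ‖c k‖) (hc.mul_left _)
      (fun k => by fun_prop) (fun k t => ?_) (fun t => ?_) n
    · simp_rw [fcoef_mul_exp, ih] at this
      rw [← this.tsum_eq, convPow, conv, ← (Equiv.subLeft n).tsum_eq]
      congr 1
      ext k
      simp [mul_comm]
    · rw [norm_mul, norm_mul, norm_pow]
      have e : ‖Complex.exp (Complex.I * k * t)‖ = 1 := by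
        have := norm_fexp (-k) t
        simpa using this
      rw [e, mul_one]
      gcongr
      exact hbd t
    · rw [pow_succ]; exact (hs t).mul_left _

lemma fcoef_sin (x : ℝ → ℝ) (hx : Continuous x) (M : ℝ)
    (hbd : ∀ t : ℝ, ‖(x t : ℂ)‖ ≤ M) (n : ℤ) :
    HasSum (fun k : ℕ => ((-1) ^ k / (Nat.factorial (2 * k + 1) : ℂ)) *
      fcoef (fun t => (x t : ℂ) ^ (2 * k + 1)) n) (fcoef (fun t => (Real.sin (x t) : ℂ)) n) := by
  have := fcoef_hasSum (fun (k : ℕ) t => ((-1) ^ k / (Nat.factorial (2 * k + 1) : ℂ)) *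
      (x t : ℂ) ^ (2 * k + 1)) (fun t => (Real.sin (x t) : ℂ))
      (fun k => M ^ (2 * k + 1) / (Nat.factorial (2 * k + 1) : ℝ))
      ((Real.summable_pow_div_factorial M).comp_injective
        (i := fun k : ℕ => 2 * k + 1) (fun a b h => by simpa using h))
      (fun k => by fun_prop) (fun k t => ?_) (fun t => ?_) n
  · convert this using 2 with k
    unfold fcoef
    rw [mul_left_comm, ← intervalIntegral.integral_const_mul]
    simp only [mul_assoc]
  · rw [norm_mul, norm_div, norm_pow, norm_pow, norm_neg, norm_one, one_pow, Complex.norm_natCast,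
      one_div, inv_mul_eq_div]
    gcongr
    exact hbd t
  · rw [Complex.ofReal_sin]
    convert Complex.hasSum_sin (x t : ℂ) using 2 with k
    ring

lemma fcoef_deriv (x : ℝ → ℝ) (hx : ContDiff ℝ 1 x) (hper : Function.Periodic x (2 * π)) (n : ℤ) :
    Complex.I * n * fcoef (fun t => (x t : ℂ)) n = fcoef (fun t => ((deriv x t : ℝ) : ℂ)) n := by
  have hd : ∀ t, HasDerivAt (fun t => (x t : ℂ)) ((deriv x t : ℝ) : ℂ) t := fun t =>
    ((hx.differentiable one_ne_zero).differentiableAt.hasDerivAt (x := t)).ofReal_comp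
  have he : ∀ t : ℝ, HasDerivAt (fun t : ℝ => Complex.exp (-(Complex.I * n * t)))
      (Complex.exp (-(Complex.I * n * t)) * (-(Complex.I * n))) t := fun t => by
    have h1 : HasDerivAt (fun t : ℝ => -(Complex.I * n * t)) (-(Complex.I * n)) t := by
      have h0 := (Complex.ofRealCLM.hasDerivAt (x := t)).const_mul (-(Complex.I * n))
      simpa using h0
    exact h1.cexp
  have hcd : Continuous (deriv x) := hx.continuous_deriv le_rfl
  have := intervalIntegral.integral_mul_deriv_eq_deriv_mul (a := 0) (b := 2 * π)
    (fun t _ => hd t) (fun t _ => he t)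
    (Continuous.intervalIntegrable (by fun_prop) _ _)
    (Continuous.intervalIntegrable (by fun_prop) _ _)
  have e1 : Complex.exp (-(Complex.I * n * ((2 * π : ℝ) : ℂ))) = 1 := by
    rw [Complex.exp_eq_one_iff]
    exact ⟨-n, by push_cast; ring⟩
  have e2 : x (2 * π) = x 0 := by simpa using hper 0
  rw [e1, e2] at this
  simp only [Complex.ofReal_zero, mul_zero, neg_zero, Complex.exp_zero, sub_self, zero_sub,
    ← mul_assoc] at this
  rw [intervalIntegral.integral_mul_const] at this
  unfold fcoef
  linear_combination (-((1 / (2 * π) : ℝ) : ℂ)) * this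

lemma fcoef_shift (f : ℝ → ℂ) (hper : Function.Periodic f (2 * π)) (τ : ℝ) (n : ℤ) :
    fcoef (fun t => f (t - τ)) n = fcoef f n * Complex.exp (-(Complex.I * n * τ)) := by
  unfold fcoef
  rw [mul_assoc, ← intervalIntegral.integral_mul_const]
  congr 1
  let g : ℝ → ℂ := fun t => f t * Complex.exp (-(Complex.I * n * t)) *
    Complex.exp (-(Complex.I * n * τ))
  have hg : Function.Periodic g (2 * π) := by
    intro t
    have : Complex.exp (-(Complex.I * n * ((t + 2 * π : ℝ) : ℂ)))
        = Complex.exp (-(Complex.I * n * t)) := by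
      rw [Complex.exp_eq_exp_iff_exists_int]
      exact ⟨-n, by push_cast; ring⟩
    simp only [g, hper t, this]
  have e : ∀ t : ℝ, f (t - τ) * Complex.exp (-(Complex.I * n * t)) = g (t - τ) := by
    intro t
    simp only [g]
    rw [mul_assoc (f (t - τ)), ← Complex.exp_add]
    congr 2
    push_cast; ring
  simp_rw [e]
  rw [intervalIntegral.integral_comp_sub_right]
  have := hg.intervalIntegral_add_eq (0 - τ) 0
  rw [zero_add] at this
  rw [← this]
  congr 1; ring

/-- Theorem `tw:fourier`, ⇒: if a `2π`-periodic `C¹` solution of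
`x'(t) = -(K/τ) sin(x(t-τ))` has Fourier coefficients `c ∈ X`, then `c` satisfies the
equations `i n c_n = -(K/τ) Σ_k ((-1)^k/(2k+1)!) (c^{*(2k+1)})_n e^{-inτ}`. -/
theorem solution_implies_fourier_equations (K τ : ℝ) (hK : 0 < K) (hτ : 0 < τ)
    (x : ℝ → ℝ) (hx : ContDiff ℝ 1 x) (hper : Function.Periodic x (2 * π))
    (c : ℤ → ℂ)
    (hcdef : ∀ n : ℤ, c n =
      ((1 / (2 * π) : ℝ) : ℂ) *
        ∫ t in (0 : ℝ)..(2 * π), (x t : ℂ) * Complex.exp (-(Complex.I * n * t)))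
    (hcX : ∃ β > 0, memX β c)
    (hode : ∀ t : ℝ, deriv x t = -(K / τ) * Real.sin (x (t - τ))) :
    ∀ n : ℤ, Complex.I * n * c n =
      -((K / τ : ℝ) : ℂ) *
        ∑' k : ℕ, ((-1) ^ k / (Nat.factorial (2 * k + 1) : ℂ)) * convPow c (2 * k + 1) n *
          Complex.exp (-(Complex.I * n * τ)) := by
  intro n
  obtain ⟨β, -, hX⟩ := hcX
  have hsum := summable_of_memX hX
  have hcf : c = fcoef (fun t => (x t : ℂ)) := funext hcdef
  have hpt : ∀ t : ℝ, HasSum (fun k => c k * Complex.exp (Complex.I * k * t)) (x t : ℂ) := by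
    intro t
    have := fourier_pointwise x hx.continuous hper (hcf ▸ hsum.of_norm) t
    rwa [← hcf] at this
  have hbd : ∀ t, ‖(x t : ℂ)‖ ≤ ∑' n, ‖c n‖ := by
    intro t
    rw [← (hpt t).tsum_eq]
    refine tsum_of_norm_bounded hsum.hasSum fun k => ?_
    have := norm_fexp (-k) t
    rw [norm_mul, show Complex.exp (Complex.I * k * t)
      = Complex.exp (-(Complex.I * ((-k : ℤ) : ℂ) * t)) by push_cast; ring_nf, this, mul_one]
  have hsin := fcoef_sin x hx.continuous _ hbd n
  simp_rw [fcoef_pow x hx.continuous c hsum hbd hpt] at hsin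
  rw [tsum_mul_right, hsin.tsum_eq, ← fcoef_shift (fun t => (Real.sin (x t) : ℂ))
    (fun t => by simp [hper t])]
  rw [hcf, fcoef_deriv x hx hper]
  simp_rw [hode]
  unfold fcoef
  rw [mul_left_comm, ← intervalIntegral.integral_const_mul (-((K / τ : ℝ) : ℂ))]
  congr 1
  refine intervalIntegral.integral_congr fun t _ => ?_
  dsimp only
  push_cast
  ring
end

section
/- Let K > 0, τ > 0, and let c ∈ X satisfy, for every n ∈ ℤ, the equation i n c_n = -(K/τ) Σ_{k=0}^∞ ((-1)^k/(2k+1)!) (c^{*(2k+1)})_n e^{-inτ}. Then the function x(t) := Σ_{n∈ℤ} c_n e^{int} is a well-defined real-valued 2π-periodic C¹ function and satisfies x'(t) = -(K/τ)·sin(x(t-τ)) for all t ∈ ℝ. -/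
open scoped Real
open Complex Filter

def shearEquiv : ℤ × ℤ ≃ ℤ × ℤ where
  toFun p := (p.2, p.1 - p.2)
  invFun q := (q.1 + q.2, q.1)
  left_inv p := by ext <;> simp
  right_inv q := by ext <;> simp

theorem conv_main (x y : ℤ → ℂ) (hx : Summable fun n => ‖x n‖) (hy : Summable fun n => ‖y n‖) :
    (Summable fun n => ‖conv x y n‖) ∧
    (∑' n, ‖conv x y n‖ ≤ (∑' n, ‖x n‖) * (∑' n, ‖y n‖)) ∧
    (∑' n, conv x y n = (∑' n, x n) * (∑' n, y n)) := by
  have h0 : Summable fun p : ℤ × ℤ => ‖x p.1 * y p.2‖ := hx.mul_norm hy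
  have h1 : Summable fun p : ℤ × ℤ => ‖x p.2 * y (p.1 - p.2)‖ :=
    (shearEquiv.summable_iff (f := fun p : ℤ × ℤ => ‖x p.1 * y p.2‖)).2 h0
  have hle : ∀ n, ‖conv x y n‖ ≤ ∑' k, ‖x k * y (n - k)‖ := fun n =>
    norm_tsum_le_tsum_norm (h1.prod_factor n)
  have hs : Summable fun n => ‖conv x y n‖ :=
    Summable.of_nonneg_of_le (fun _ => norm_nonneg _) hle h1.prod
  refine ⟨hs, ?_, ?_⟩
  · calc ∑' n, ‖conv x y n‖ ≤ ∑' n, ∑' k, ‖x k * y (n - k)‖ := hs.tsum_le_tsum hle h1.prod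
      _ = ∑' p : ℤ × ℤ, ‖x p.2 * y (p.1 - p.2)‖ := h1.tsum_prod.symm
      _ = ∑' p : ℤ × ℤ, ‖x p.1 * y p.2‖ :=
        shearEquiv.tsum_eq (fun p : ℤ × ℤ => ‖x p.1 * y p.2‖)
      _ = ∑' p : ℤ × ℤ, ‖x p.1‖ * ‖y p.2‖ := by simp only [norm_mul]
      _ = _ := (hx.tsum_mul_tsum hy (by simpa only [norm_mul] using h0)).symm
      _ ≤ _ := le_rfl
  · calc ∑' n, conv x y n = ∑' p : ℤ × ℤ, x p.2 * y (p.1 - p.2) := (h1.of_norm.tsum_prod).symm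
      _ = ∑' p : ℤ × ℤ, x p.1 * y p.2 := shearEquiv.tsum_eq (fun p : ℤ × ℤ => x p.1 * y p.2)
      _ = _ := (hx.of_norm.tsum_mul_tsum hy.of_norm h0.of_norm).symm

theorem conv_char (x y E : ℤ → ℂ) (hE : ∀ a b, E (a + b) = E a * E b) (n : ℤ) :
    conv (fun k => x k * E k) (fun k => y k * E k) n = conv x y n * E n := by
  unfold conv
  rw [← tsum_mul_right]
  congr 1; ext k
  have : E n = E k * E (n - k) := by rw [← hE]; simp
  rw [this]; ring

theorem convPow_main (c E : ℤ → ℂ) (hc : Summable fun n => ‖c n‖)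
    (hE : ∀ a b, E (a + b) = E a * E b) (hE0 : E 0 = 1) (hE1 : ∀ n, ‖E n‖ = 1) (m : ℕ) :
    (Summable fun n => ‖convPow c m n‖) ∧ (∑' n, ‖convPow c m n‖ ≤ (∑' n, ‖c n‖) ^ m) ∧
    (∑' n, convPow c m n * E n = (∑' n, c n * E n) ^ m) := by
  induction m with
  | zero =>
    have e : (fun n : ℤ => ‖convPow c 0 n‖) = fun n => if n = 0 then 1 else 0 := by
      ext n; simp only [convPow]; split_ifs <;> simp
    refine ⟨?_, ?_, ?_⟩
    · rw [e]; exact (hasSum_ite_eq (0:ℤ) (1:ℝ)).summable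
    · rw [e]; simp
    · simp [convPow, hE0]
  | succ m ih =>
    obtain ⟨h1, h2, h3⟩ := ih
    obtain ⟨a1, a2, -⟩ := conv_main _ _ h1 hc
    refine ⟨a1, ?_, ?_⟩
    · refine a2.trans ?_
      rw [pow_succ]
      gcongr
    · have := (conv_main (fun k => convPow c m k * E k) (fun k => c k * E k)
        (by simpa [hE1] using h1) (by simpa [hE1] using hc)).2.2
      simp only [conv_char _ _ E hE] at this
      rw [pow_succ, ← h3]; exact this

/-- coefficients of the sine series -/
noncomputable def sinCoef (k : ℕ) : ℂ := (-1) ^ k / (Nat.factorial (2 * k + 1) : ℂ)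

theorem sin_series (c E : ℤ → ℂ) (hc : Summable fun n => ‖c n‖)
    (hE : ∀ a b, E (a + b) = E a * E b) (hE0 : E 0 = 1) (hE1 : ∀ n, ‖E n‖ = 1) :
    (Summable fun n => ‖∑' k, sinCoef k * convPow c (2 * k + 1) n‖) ∧
    ∑' n, (∑' k, sinCoef k * convPow c (2 * k + 1) n) * E n = Complex.sin (∑' n, c n * E n) := by
  have hp := convPow_main c E hc hE hE0 hE1
  set B := ∑' n, ‖c n‖
  have hB : 0 ≤ B := tsum_nonneg fun _ => norm_nonneg _
  have hnc : ∀ k, ‖sinCoef k‖ = 1 / (Nat.factorial (2 * k + 1) : ℝ) := by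
    intro k; simp [sinCoef]
  have hB2 : Summable fun k : ℕ => ‖sinCoef k‖ * B ^ (2 * k + 1) := by
    have := (Real.summable_pow_div_factorial B).comp_injective
      (i := fun k : ℕ => 2 * k + 1) (fun a b h => by simpa using h)
    refine this.congr fun k => ?_
    simp [hnc]; ring
  have hF : Summable fun p : ℕ × ℤ => ‖sinCoef p.1 * convPow c (2 * p.1 + 1) p.2‖ := by
    rw [summable_prod_of_nonneg (fun _ => norm_nonneg _)]
    refine ⟨fun k => ?_, ?_⟩
    · simpa only [norm_mul] using (hp (2 * k + 1)).1.mul_left _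
    · refine Summable.of_nonneg_of_le (fun _ => tsum_nonneg fun _ => norm_nonneg _)
        (fun k => ?_) hB2
      simp only [norm_mul, tsum_mul_left]
      exact mul_le_mul_of_nonneg_left (hp _).2.1 (norm_nonneg _)
  have hG : Summable fun p : ℤ × ℕ => ‖sinCoef p.2 * convPow c (2 * p.2 + 1) p.1‖ :=
    hF.prod_symm
  refine ⟨Summable.of_nonneg_of_le (fun _ => norm_nonneg _)
    (fun n => norm_tsum_le_tsum_norm (hG.prod_factor n)) hG.prod, ?_⟩
  have hFE : Summable fun p : ℕ × ℤ => sinCoef p.1 * convPow c (2 * p.1 + 1) p.2 * E p.2 :=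
    Summable.of_norm (by simpa [hE1] using hF)
  simp only [← tsum_mul_right]
  rw [Summable.tsum_comm (f := fun k n => sinCoef k * convPow c (2 * k + 1) n * E n) hFE]
  rw [← (Complex.hasSum_sin _).tsum_eq]
  congr 1; ext k
  simp only [mul_assoc, tsum_mul_left]
  rw [(hp _).2.2, sinCoef]; ring

theorem memX_summable {β : ℝ} {c : ℤ → ℂ} (h : memX β c) : Summable fun n => ‖c n‖ := by
  have hs : Summable fun n : ℤ => β * (1 / |(n : ℝ)| ^ 2) + (if n = 0 then β else 0) :=
    ((Real.summable_one_div_int_pow.2 one_lt_two).congr (fun n => by simp)).mul_left β |>.add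
      (hasSum_ite_eq (0:ℤ) β).summable
  have hβ : 0 ≤ β := by have := (norm_nonneg _).trans (h.1 0); simpa using this
  refine Summable.of_nonneg_of_le (fun _ => norm_nonneg _) (fun n => (h.1 n).trans ?_) hs
  by_cases hn : n = 0
  · simp [hn]
  · have : 0 < |(n:ℝ)| := by simpa using hn
    simp only [hn, if_false, add_zero]
    rw [div_eq_mul_one_div]
    gcongr
    linarith

/-- Theorem `tw:fourier`, ⇐: if `c ∈ X` satisfies the Fourier equations, then
`x(t) = Σ c_n e^{int}` is a well-defined real-valued `2π`-periodic `C¹` solution of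
`x'(t) = -(K/τ) sin(x(t-τ))`. -/
theorem fourier_equations_imply_solution (K τ : ℝ) (hK : 0 < K) (hτ : 0 < τ)
    (c : ℤ → ℂ) (hcX : ∃ β > 0, memX β c)
    (heq : ∀ n : ℤ, Complex.I * n * c n =
      -((K / τ : ℝ) : ℂ) *
        ∑' k : ℕ, ((-1) ^ k / (Nat.factorial (2 * k + 1) : ℂ)) * convPow c (2 * k + 1) n *
          Complex.exp (-(Complex.I * n * τ))) :
    (∀ t : ℝ, Summable (fun n : ℤ => c n * Complex.exp (Complex.I * n * t))) ∧
    ∃ g : ℝ → ℝ,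
      (∀ t : ℝ, (g t : ℂ) = ∑' n : ℤ, c n * Complex.exp (Complex.I * n * t)) ∧
      Function.Periodic g (2 * π) ∧ ContDiff ℝ 1 g ∧
      ∀ t : ℝ, deriv g t = -(K / τ) * Real.sin (g (t - τ)) := by
  obtain ⟨β, -, hX⟩ := hcX
  have hc := memX_summable hX
  have hnE : ∀ (t : ℝ) (n : ℤ), ‖Complex.exp (Complex.I * n * t)‖ = 1 := by
    intro t n
    rw [show Complex.I * n * t = ((n * t : ℝ) : ℂ) * Complex.I by push_cast; ring]
    exact Complex.norm_exp_ofReal_mul_I _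
  have hser := fun t : ℝ => sin_series c (fun n => Complex.exp (Complex.I * n * t)) hc
    (fun a b => by rw [← Complex.exp_add]; congr 1; push_cast; ring) (by simp) (hnE t)
  set S : ℤ → ℂ := fun n => ∑' k, sinCoef k * convPow c (2 * k + 1) n with hS
  have heq' : ∀ n : ℤ, Complex.I * n * c n =
      -((K / τ : ℝ) : ℂ) * (S n * Complex.exp (-(Complex.I * n * τ))) := by
    intro n; rw [heq n, tsum_mul_right]; rfl
  have hSs : Summable fun n => ‖S n‖ := (hser 0).1
  have hsum : ∀ t : ℝ, Summable (fun n : ℤ => c n * Complex.exp (Complex.I * n * t)) := by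
    intro t; apply Summable.of_norm; simpa [hnE] using hc
  refine ⟨hsum, ?_⟩
  set f : ℝ → ℂ := fun t => ∑' n : ℤ, c n * Complex.exp (Complex.I * n * t) with hf
  have hreal : ∀ t, ((f t).re : ℂ) = f t := by
    intro t
    rw [← Complex.conj_eq_iff_re]
    simp only [hf]
    rw [Complex.conj_tsum, ← (Equiv.neg ℤ).tsum_eq]
    congr 1; ext n
    simp only [Equiv.neg_apply, map_mul, hX.2, Complex.conj_conj, ← Complex.exp_conj]
    simp
  have hnm : ∀ n : ℤ, ‖Complex.I * n * c n‖ = |K / τ| * ‖S n‖ := by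
    intro n
    rw [heq' n]
    have := hnE (-τ) n
    rw [show Complex.I * n * ((-τ : ℝ) : ℂ) = -(Complex.I * n * τ) by push_cast; ring] at this
    rw [norm_mul, norm_mul, this, norm_neg, Complex.norm_real, Real.norm_eq_abs, mul_one]
  have hder : ∀ t : ℝ, HasDerivAt f (-((K / τ : ℝ) : ℂ) * Complex.sin (f (t - τ))) t := by
    intro t
    have h1 : HasDerivAt f
        (∑' n : ℤ, Complex.I * n * c n * Complex.exp (Complex.I * n * t)) t := by
      refine hasDerivAt_tsum (u := fun n => |K / τ| * ‖S n‖) (hSs.mul_left _)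
        (g := fun (n : ℤ) (t : ℝ) => c n * Complex.exp (Complex.I * n * t))
        (g' := fun (n : ℤ) (t : ℝ) => Complex.I * n * c n * Complex.exp (Complex.I * n * t))
        (fun n y => ?_) (fun n y => ?_) (hsum 0 |>.congr fun n => rfl) t
      · have hid : HasDerivAt (fun s : ℝ => (s : ℂ)) 1 y := Complex.ofRealCLM.hasDerivAt
        have := ((hid.const_mul (Complex.I * (n:ℂ))).cexp).const_mul (c n)
        exact this.congr_deriv (by ring)
      · rw [norm_mul, hnE, hnm, mul_one]
    refine h1.congr_deriv ?_
    symm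
    have h2 := (hser (t - τ)).2
    simp only [hf]
    rw [← h2, ← tsum_mul_left]
    congr 1; ext n
    rw [heq' n]
    have : Complex.exp (Complex.I * n * ((t - τ : ℝ) : ℂ)) =
      Complex.exp (-(Complex.I * n * τ)) * Complex.exp (Complex.I * n * t) := by
      rw [← Complex.exp_add]; congr 1; push_cast; ring
    rw [this]; ring
  have hgder : ∀ t : ℝ, HasDerivAt (fun t => (f t).re)
      (-(K / τ) * Real.sin ((f (t - τ)).re)) t := by
    intro t
    have := Complex.reCLM.hasFDerivAt.comp_hasDerivAt t (hder t)
    refine HasDerivAt.congr_deriv (f := fun t => (f t).re) this ?_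
    have e : -((K / τ : ℝ) : ℂ) * Complex.sin (f (t - τ)) =
        ((-(K / τ) * Real.sin ((f (t - τ)).re) : ℝ) : ℂ) := by
      rw [Complex.ofReal_mul, Complex.ofReal_sin, hreal, Complex.ofReal_neg]
    rw [e]
    exact Complex.ofReal_re _
  refine ⟨fun t => (f t).re, hreal, ?_, ?_, fun t => (hgder t).deriv⟩
  · intro t
    have : f (t + 2 * π) = f t := by
      simp only [hf]
      congr 1; ext n
      rw [show Complex.I * n * ((t + 2 * π : ℝ) : ℂ) =
        Complex.I * n * t + n * (2 * π * Complex.I) by push_cast; ring,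
        Complex.exp_add, Complex.exp_int_mul_two_pi_mul_I, mul_one]
    simp only [this]
  · rw [contDiff_one_iff_deriv]
    have hd : Differentiable ℝ fun t => (f t).re := fun t => (hgder t).differentiableAt
    refine ⟨hd, ?_⟩
    rw [show deriv (fun t => (f t).re) = fun t => -(K / τ) * Real.sin ((f (t - τ)).re) from
      funext fun t => (hgder t).deriv]
    have hcont := hd.continuous
    exact continuous_const.mul
      (Real.continuous_sin.comp (hcont.comp (continuous_id.sub continuous_const)))
end

section
/- For every β > 0, the convolution map (x, y) ↦ x*y is continuous as a map from X_β × X_β to ℂ^ℤ, where X_β carries the product (componentwise) topology and ℂ^ℤ the product topology. -/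
open scoped Real
open Complex Filter

/-- convolution is continuous on `X_β × X_β` (product/componentwise topology). -/
theorem conv_continuous_on_Xbeta (β : ℝ) (hβ : 0 < β) :
    Continuous (fun p : {x : ℤ → ℂ // memX β x} × {x : ℤ → ℂ // memX β x} =>
      conv p.1.val p.2.val) := by
  have hs : Summable (fun k : ℤ => β / (|(k : ℝ)| + 1) ^ 2 * β) := by
    have h1 : Summable (fun n : ℕ => β / ((n : ℝ) + 1) ^ 2 * β) := by
      have h := (summable_nat_add_iff 1).2
        (Real.summable_one_div_nat_pow (p := 2).2 (by norm_num))
      refine ((h.mul_left β).mul_right β).congr fun n => ?_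
      push_cast
      ring
    refine Summable.of_nat_of_neg ?_ ?_
    · simpa using h1
    · simpa using h1
  refine continuous_pi fun n => ?_
  unfold conv
  refine continuous_tsum (fun k => ?_) hs fun k p => ?_
  · exact ((continuous_apply k).comp (continuous_subtype_val.comp continuous_fst)).mul
      ((continuous_apply (n - k)).comp (continuous_subtype_val.comp continuous_snd))
  · rw [norm_mul]
    refine mul_le_mul (p.1.2.1 k) ((p.2.2.1 (n - k)).trans ?_) (norm_nonneg _) (by positivity)
    refine div_le_self hβ.le (one_le_pow₀ ?_)
    linarith [abs_nonneg (((n - k : ℤ)) : ℝ)]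
end

section
/- Let K > 0, β > 0, l ≥ 0, let c ∈ X satisfy c_n = 0 for all |n| > l, let p > 1 be an integer and N > p·l. Then for every x ∈ X_β and every integer n > N: |(K/p!)·((x+c)^{*p})_n| ≤ (K/p!)·( Σ_{k=0}^{p-1} binom(p,k) Σ_{j=-lk}^{lk} |(c^{*k})_j| · (10β)^{p-k-1} · (N+1)²/(N-j+1)² ) · β/(|n|+1)². -/
open scoped Real
open Complex Filter

theorem shear_summable {x y : ℤ → ℂ} (hx : Summable fun n => ‖x n‖)
    (hy : Summable fun n => ‖y n‖) :
    Summable fun q : ℤ × ℤ => ‖x q.1 * y (q.2 - q.1)‖ := by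
  have h := Summable.mul_norm hx hy
  let e : ℤ × ℤ ≃ ℤ × ℤ :=
    { toFun := fun q => (q.1, q.2 - q.1)
      invFun := fun q => (q.1, q.2 + q.1)
      left_inv := fun q => by simp
      right_inv := fun q => by simp }
  exact (e.summable_iff (f := fun q : ℤ × ℤ => ‖x q.1 * y q.2‖)).2 h

theorem conv_inner_summable {x y : ℤ → ℂ} (hx : Summable fun n => ‖x n‖)
    (hy : Summable fun n => ‖y n‖) (n : ℤ) :
    Summable fun k : ℤ => ‖x k * y (n - k)‖ := by
  have h := (shear_summable hx hy).prod_symm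
  exact h.prod_factor n

theorem conv_summable {x y : ℤ → ℂ} (hx : Summable fun n => ‖x n‖)
    (hy : Summable fun n => ‖y n‖) : Summable fun n => ‖conv x y n‖ := by
  have h := (shear_summable hx hy).prod_symm.prod
  refine Summable.of_nonneg_of_le (fun _ => norm_nonneg _) (fun n => ?_) h
  exact norm_tsum_le_tsum_norm (conv_inner_summable hx hy n)

theorem conv_comm' (x y : ℤ → ℂ) : conv x y = conv y x := by
  funext n
  unfold conv
  rw [← (Equiv.subLeft n).tsum_eq (fun k => x k * y (n - k))]
  refine tsum_congr fun k => ?_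
  simp [mul_comm]

theorem conv_assoc' {x y z : ℤ → ℂ} (hx : Summable fun n => ‖x n‖)
    (hy : Summable fun n => ‖y n‖) (hz : Summable fun n => ‖z n‖) :
    conv (conv x y) z = conv x (conv y z) := by
  funext n
  unfold conv
  have hs : Summable (Function.uncurry fun k m : ℤ => x k * y (m - k) * z (n - m)) := by
    apply Summable.of_norm
    refine Summable.of_nonneg_of_le (fun _ => norm_nonneg _) (fun q => ?_)
      ((shear_summable hx hy).mul_right (∑' n, ‖z n‖))
    simp only [Function.uncurry]
    rw [norm_mul (x q.1 * y (q.2 - q.1))]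
    gcongr
    exact hz.le_tsum (n - q.2) (fun _ _ => norm_nonneg _)
  calc ∑' m, (∑' k, x k * y (m - k)) * z (n - m)
      = ∑' m, ∑' k, x k * y (m - k) * z (n - m) := tsum_congr fun m => tsum_mul_right.symm
    _ = ∑' k, ∑' m, x k * y (m - k) * z (n - m) := hs.tsum_comm
    _ = ∑' k, x k * ∑' j, y j * z (n - k - j) := by
      refine tsum_congr fun k => ?_
      rw [← tsum_mul_left, ← (Equiv.addRight k).tsum_eq]
      refine tsum_congr fun j => ?_
      simp only [Equiv.coe_addRight, add_sub_cancel_right]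
      rw [mul_assoc]
      congr 3
      ring

def delta : ℤ → ℂ := fun n => if n = 0 then 1 else 0

theorem delta_summable : Summable fun n => ‖delta n‖ := by
  apply summable_of_ne_finset_zero (s := {0})
  intro b hb
  simp at hb
  simp [delta, hb]

theorem delta_conv (x : ℤ → ℂ) : conv delta x = x := by
  funext n
  unfold conv
  rw [tsum_eq_single 0]
  · simp [delta]
  · intro b hb
    simp [delta, hb]

def SA : AddSubmonoid (ℤ → ℂ) where
  carrier := {x | Summable fun n => ‖x n‖}
  zero_mem' := by simp [summable_zero]
  add_mem' := by
    intro a b ha hb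
    exact Summable.of_nonneg_of_le (fun _ => norm_nonneg _) (fun n => norm_add_le _ _)
      (Summable.add ha hb)

theorem conv_add {x y z : ℤ → ℂ} (hx : Summable fun n => ‖x n‖)
    (hy : Summable fun n => ‖y n‖) (hz : Summable fun n => ‖z n‖) :
    conv x (y + z) = conv x y + conv x z := by
  funext n
  simp only [conv, Pi.add_apply, mul_add]
  exact Summable.tsum_add (conv_inner_summable hx hy n).of_norm
    (conv_inner_summable hx hz n).of_norm

noncomputable instance : CommSemiring SA :=
  { (inferInstance : AddCommMonoid SA) with
    mul := fun a b => ⟨conv a.1 b.1, conv_summable a.2 b.2⟩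
    one := ⟨delta, delta_summable⟩
    mul_assoc := fun a b c => Subtype.ext (conv_assoc' a.2 b.2 c.2)
    mul_comm := fun a b => Subtype.ext (conv_comm' a.1 b.1)
    one_mul := fun a => Subtype.ext (delta_conv a.1)
    mul_one := fun a => Subtype.ext ((conv_comm' _ _).trans (delta_conv a.1))
    left_distrib := fun a b c => Subtype.ext (conv_add a.2 b.2 c.2)
    right_distrib := fun a b c => Subtype.ext (by
      show conv (a.1 + b.1) c.1 = conv a.1 c.1 + conv b.1 c.1
      rw [conv_comm', conv_add c.2 a.2 b.2, conv_comm' c.1, conv_comm' c.1])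
    zero_mul := fun a => Subtype.ext (by
      funext n
      show conv 0 a.1 n = 0
      simp [conv])
    mul_zero := fun a => Subtype.ext (by
      funext n
      show conv a.1 0 n = 0
      simp [conv]) }

theorem SA_pow (a : SA) (k : ℕ) : ((a ^ k : SA) : ℤ → ℂ) = convPow a.1 k := by
  induction k with
  | zero => rw [pow_zero]; rfl
  | succ k ih =>
    rw [pow_succ]
    show conv (a ^ k : SA).1 a.1 = conv (convPow a.1 k) a.1
    rw [ih]

theorem convPow_add {x c : ℤ → ℂ} (hx : Summable fun n => ‖x n‖)
    (hc : Summable fun n => ‖c n‖) (p : ℕ) (n : ℤ) :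
    convPow (x + c) p n = ∑ k ∈ Finset.range (p + 1),
      (p.choose k : ℂ) * conv (convPow c k) (convPow x (p - k)) n := by
  let X : SA := ⟨x, hx⟩
  let C : SA := ⟨c, hc⟩
  have h := add_pow C X p
  have h2 : ((C + X) ^ p : SA).1 = convPow (x + c) p := by
    rw [SA_pow]; congr 1; exact add_comm c x
  rw [← h2, h]
  have h3 : ∀ (s : Finset ℕ) (f : ℕ → SA), (∑ k ∈ s, f k).1 n = ∑ k ∈ s, (f k).1 n := by
    intro s f
    have := congrFun (map_sum SA.subtype f s) n
    rw [Finset.sum_apply] at this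
    exact this
  rw [h3]
  refine Finset.sum_congr rfl fun k _ => ?_
  rw [mul_comm, ← nsmul_eq_mul]
  have := congrFun (map_nsmul SA.subtype (p.choose k) (C ^ k * X ^ (p - k))) n
  refine Eq.trans this ?_
  rw [Pi.smul_apply, nsmul_eq_mul]
  congr 1
  show conv (C ^ k : SA).1 (X ^ (p - k) : SA).1 n = _
  rw [SA_pow, SA_pow]

theorem wt_hasSum : HasSum (fun n : ℤ => 1 / (|(n : ℝ)| + 1) ^ 2) (π ^ 2 / 6 + (π ^ 2 / 6 - 1)) := by
  have h0 := hasSum_zeta_two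
  have h1 := (hasSum_nat_add_iff' (f := fun n : ℕ => (1 : ℝ) / (n : ℝ) ^ 2) 1).2 h0
  have h2 := (hasSum_nat_add_iff' (f := fun n : ℕ => (1 : ℝ) / (n : ℝ) ^ 2) 2).2 h0
  simp [Finset.sum_range_succ] at h1 h2
  apply HasSum.of_nat_of_neg_add_one
  · have e : (fun n : ℕ => 1 / (|(((n : ℤ) : ℤ) : ℝ)| + 1) ^ 2) =
        fun n : ℕ => (((n : ℝ) + 1) ^ 2)⁻¹ := by
      funext n
      simp
    rw [e]
    exact h1
  · have e : (fun n : ℕ => 1 / (|((-((n : ℤ) + 1) : ℤ) : ℝ)| + 1) ^ 2) =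
        fun n : ℕ => (((n : ℝ) + 2) ^ 2)⁻¹ := by
      funext n
      have : |((-((n : ℤ) + 1) : ℤ) : ℝ)| = n + 1 := by
        push_cast
        rw [abs_of_nonpos (by linarith [Nat.cast_nonneg (α := ℝ) n])]
        ring
      rw [this, one_div]
      congr 2
      ring
    rw [e]
    exact h2

theorem wt_conv (n : ℤ) :
    Summable (fun k : ℤ => 1 / (|(k : ℝ)| + 1) ^ 2 * (1 / (|((n - k : ℤ) : ℝ)| + 1) ^ 2)) ∧
    ∑' k : ℤ, 1 / (|(k : ℝ)| + 1) ^ 2 * (1 / (|((n - k : ℤ) : ℝ)| + 1) ^ 2)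
      ≤ 10 / (|(n : ℝ)| + 1) ^ 2 := by
  have hw := wt_hasSum
  have hw2 : HasSum (fun k : ℤ => 1 / (|((n - k : ℤ) : ℝ)| + 1) ^ 2)
      (π ^ 2 / 6 + (π ^ 2 / 6 - 1)) := by
    have := (Equiv.subLeft n).hasSum_iff (f := fun k : ℤ => 1 / (|(k : ℝ)| + 1) ^ 2)
      (a := π ^ 2 / 6 + (π ^ 2 / 6 - 1))
    exact this.2 hw
  have hs := (hw.add hw2).mul_left (2 / (|(n : ℝ)| + 1) ^ 2)
  have hle : ∀ k : ℤ, 1 / (|(k : ℝ)| + 1) ^ 2 * (1 / (|((n - k : ℤ) : ℝ)| + 1) ^ 2) ≤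
      2 / (|(n : ℝ)| + 1) ^ 2 *
        (1 / (|(k : ℝ)| + 1) ^ 2 + 1 / (|((n - k : ℤ) : ℝ)| + 1) ^ 2) := by
    intro k
    have htri : |(n : ℝ)| ≤ |(k : ℝ)| + |((n - k : ℤ) : ℝ)| := by
      have := abs_add_le (k : ℝ) ((n - k : ℤ) : ℝ)
      push_cast at this ⊢
      simpa using this
    have ha := abs_nonneg (k : ℝ)
    have hb := abs_nonneg (((n - k : ℤ) : ℝ))
    have hn := abs_nonneg (n : ℝ)
    generalize |(k : ℝ)| = a at *
    generalize |((n - k : ℤ) : ℝ)| = b at *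
    generalize |(n : ℝ)| = m at *
    have e : 1 / (a + 1) ^ 2 + 1 / (b + 1) ^ 2 =
      ((a + 1) ^ 2 + (b + 1) ^ 2) * (1 / (a + 1) ^ 2 * (1 / (b + 1) ^ 2)) := by
      field_simp
      ring
    rw [e, ← mul_assoc]
    apply le_mul_of_one_le_left (by positivity)
    rw [div_mul_eq_mul_div, one_le_div (by positivity)]
    have : (m + 1) ^ 2 ≤ ((a + 1) + (b + 1)) ^ 2 := by
      apply pow_le_pow_left₀ (by positivity); linarith
    nlinarith [sq_nonneg (a - b)]
  have hsum : Summable (fun k : ℤ => 1 / (|(k : ℝ)| + 1) ^ 2 *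
      (1 / (|((n - k : ℤ) : ℝ)| + 1) ^ 2)) :=
    Summable.of_nonneg_of_le (fun k => by positivity) hle hs.summable
  refine ⟨hsum, (hsum.tsum_le_tsum hle hs.summable).trans ?_⟩
  rw [hs.tsum_eq, div_mul_eq_mul_div]
  gcongr
  have := Real.pi_lt_d2
  nlinarith [Real.pi_pos]

theorem decay_summable {β : ℝ} {x : ℤ → ℂ} (hx : ∀ n : ℤ, ‖x n‖ ≤ β / (|(n : ℝ)| + 1) ^ 2) :
    Summable fun n => ‖x n‖ := by
  refine Summable.of_nonneg_of_le (fun _ => norm_nonneg _) hx ?_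
  exact (wt_hasSum.summable.mul_left β).congr fun n => by rw [mul_one_div]

theorem conv_decay {a b : ℝ} (ha : 0 ≤ a) (hb : 0 ≤ b) {x y : ℤ → ℂ}
    (hx : ∀ n : ℤ, ‖x n‖ ≤ a / (|(n : ℝ)| + 1) ^ 2)
    (hy : ∀ n : ℤ, ‖y n‖ ≤ b / (|(n : ℝ)| + 1) ^ 2) (n : ℤ) :
    ‖conv x y n‖ ≤ (10 * a * b) / (|(n : ℝ)| + 1) ^ 2 := by
  obtain ⟨h1, h2⟩ := wt_conv n
  have hs := conv_inner_summable (decay_summable hx) (decay_summable hy) n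
  refine (norm_tsum_le_tsum_norm hs).trans ?_
  refine (hs.tsum_le_tsum (fun k => ?_) (h1.mul_left (a * b))).trans ?_
  · rw [norm_mul]
    refine (mul_le_mul (hx k) (hy _) (norm_nonneg _) (by positivity)).trans (le_of_eq ?_)
    ring
  · rw [tsum_mul_left]
    refine (mul_le_mul_of_nonneg_left h2 (by positivity)).trans (le_of_eq ?_)
    ring

theorem convPow_decay {β : ℝ} (hβ : 0 < β) {x : ℤ → ℂ}
    (hx : ∀ n : ℤ, ‖x n‖ ≤ β / (|(n : ℝ)| + 1) ^ 2) (m : ℕ) :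
    ∀ n : ℤ, ‖convPow x (m + 1) n‖ ≤ ((10 * β) ^ m * β) / (|(n : ℝ)| + 1) ^ 2 := by
  induction m with
  | zero =>
    intro n
    have : convPow x (0 + 1) = x := delta_conv x
    rw [this]
    simpa using hx n
  | succ m ih =>
    intro n
    refine (conv_decay (by positivity) hβ.le ih hx n).trans (le_of_eq ?_)
    ring

theorem convPow_supp {c : ℤ → ℂ} {l : ℕ} (hsupp : ∀ n : ℤ, (l : ℤ) < |n| → c n = 0) (k : ℕ) :
    ∀ n : ℤ, (l * k : ℤ) < |n| → convPow c k n = 0 := by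
  induction k with
  | zero =>
    intro n hn
    have : n ≠ 0 := by simpa using hn
    simp [convPow, this]
  | succ k ih =>
    intro n hn
    show ∑' j, convPow c k j * c (n - j) = 0
    rw [← tsum_zero (β := ℤ)]
    refine tsum_congr fun j => ?_
    by_cases hj : (l * k : ℤ) < |j|
    · rw [ih j hj, zero_mul]
    · rw [hsupp (n - j), mul_zero]
      have := abs_sub_abs_le_abs_sub n j
      push_cast at hn
      nlinarith

theorem convPow_symm {c : ℤ → ℂ} (hc : ∀ n : ℤ, c (-n) = starRingEnd ℂ (c n)) (k : ℕ) :
    ∀ n : ℤ, convPow c k (-n) = starRingEnd ℂ (convPow c k n) := by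
  induction k with
  | zero =>
    intro n
    by_cases h : n = 0 <;> simp [convPow, h]
  | succ k ih =>
    intro n
    show ∑' j, convPow c k j * c (-n - j) = starRingEnd ℂ (∑' j, convPow c k j * c (n - j))
    rw [Complex.conj_tsum, ← (Equiv.neg ℤ).tsum_eq]
    refine tsum_congr fun j => ?_
    rw [Equiv.neg_apply, map_mul, ih, ← hc]
    congr 2
    ring

theorem pointwise_pair {M P j : ℝ} (hP : 0 < P) (hMP : P ≤ M) (hj : |j| < P) :
    1 / (M - j) ^ 2 + 1 / (M + j) ^ 2 ≤
      P ^ 2 / (P - j) ^ 2 / M ^ 2 + P ^ 2 / (P + j) ^ 2 / M ^ 2 := by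
  obtain ⟨h1, h2⟩ := abs_lt.1 hj
  have a1 : 0 < M - j := by linarith
  have a2 : 0 < M + j := by linarith
  have a3 : 0 < P - j := by linarith
  have a4 : 0 < P + j := by linarith
  have hM : 0 < M := by linarith
  have e1 : 1 / (M - j) ^ 2 + 1 / (M + j) ^ 2 =
      2 * (M ^ 2 + j ^ 2) / ((M - j) * (M + j)) ^ 2 := by field_simp; ring
  have e2 : P ^ 2 / (P - j) ^ 2 / M ^ 2 + P ^ 2 / (P + j) ^ 2 / M ^ 2 =
      2 * P ^ 2 * (P ^ 2 + j ^ 2) / (M ^ 2 * ((P - j) * (P + j)) ^ 2) := by field_simp; ring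
  rw [e1, e2, div_le_div_iff₀ (by positivity) (by positivity)]
  have hu : P ^ 2 ≤ M ^ 2 := by gcongr
  have hs : j ^ 2 ≤ P ^ 2 := by nlinarith
  have hs0 := sq_nonneg j
  have i1 : (M - j) * (M + j) = M ^ 2 - j ^ 2 := by ring
  have i2 : (P - j) * (P + j) = P ^ 2 - j ^ 2 := by ring
  rw [i1, i2]
  generalize M ^ 2 = u at *
  generalize P ^ 2 = v at *
  generalize j ^ 2 = s at *
  have key : 0 ≤ s * (u - v) * (3 * u * v - s * (u + v) - s ^ 2) := by
    apply mul_nonneg (mul_nonneg hs0 (by linarith))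
    nlinarith [mul_le_mul hs hs hs0 (by linarith), mul_nonneg hs0 (sub_nonneg.2 hu),
      mul_nonneg (sub_nonneg.2 hs) (sub_nonneg.2 hu), mul_nonneg (sub_nonneg.2 hs) hs0,
      mul_nonneg (sub_nonneg.2 hs) (hs0.trans hs), mul_nonneg (hs0.trans hs) (sub_nonneg.2 hu)]
  nlinarith

theorem sym_sum (a : ℤ → ℝ) (ha : ∀ j, 0 ≤ a j) (hsym : ∀ j, a (-j) = a j) (L : ℤ)
    {M P : ℝ} (hMP : P ≤ M) (hL : (L : ℝ) < P) (hP : 0 < P) :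
    ∑ j ∈ Finset.Icc (-L) L, a j * (1 / (M - j) ^ 2) ≤
      ∑ j ∈ Finset.Icc (-L) L, a j * (P ^ 2 / (P - j) ^ 2 / M ^ 2) := by
  have flip : ∀ f : ℝ → ℝ, ∑ j ∈ Finset.Icc (-L) L, a j * f j =
      ∑ j ∈ Finset.Icc (-L) L, a j * f (-j) := by
    intro f
    refine Finset.sum_equiv (Equiv.neg ℤ) (fun j => ?_) (fun j _ => ?_)
    · simp only [Finset.mem_Icc, Equiv.neg_apply]; omega
    · simp [hsym]
  have f1 := flip fun t => 1 / (M - t) ^ 2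
  have f2 := flip fun t => P ^ 2 / (P - t) ^ 2 / M ^ 2
  have : ∑ j ∈ Finset.Icc (-L) L, (a j * (1 / (M - j) ^ 2) + a j * (1 / (M - -j) ^ 2)) ≤
      ∑ j ∈ Finset.Icc (-L) L,
        (a j * (P ^ 2 / (P - j) ^ 2 / M ^ 2) + a j * (P ^ 2 / (P - -j) ^ 2 / M ^ 2)) := by
    refine Finset.sum_le_sum fun j hj => ?_
    rw [← mul_add, ← mul_add, sub_neg_eq_add, sub_neg_eq_add]
    refine mul_le_mul_of_nonneg_left (pointwise_pair hP hMP ?_) (ha j)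
    rw [Finset.mem_Icc, ← abs_le] at hj
    refine lt_of_le_of_lt ?_ hL
    exact_mod_cast hj
  rw [Finset.sum_add_distrib, Finset.sum_add_distrib] at this
  linarith

/-- Lemma `lem:wysoko`: for `c` supported in `[-l,l]`, `x ∈ X_β`, `p > 1`,
`N > pl` and `n > N`, an `n`-uniform estimate of `(K/p!)((x+c)^{*p})_n`. -/
theorem high_modes_estimate (K β : ℝ) (hK : 0 < K) (hβ : 0 < β) (l : ℕ)
    (c : ℤ → ℂ) (hcX : ∃ β' > 0, memX β' c) (hsupp : ∀ n : ℤ, (l : ℤ) < |n| → c n = 0)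
    (p : ℕ) (hp : 1 < p) (N : ℕ) (hN : p * l < N) (x : ℤ → ℂ) (hx : memX β x) :
    ∀ n : ℤ, (N : ℤ) < n →
      ‖(K / (Nat.factorial p : ℂ)) * convPow (x + c) p n‖ ≤
        (K / (Nat.factorial p : ℝ)) *
          (∑ k ∈ Finset.range p, (p.choose k : ℝ) *
            ∑ j ∈ Finset.Icc (-(l * k : ℤ)) (l * k : ℤ),
              ‖convPow c k j‖ * (10 * β) ^ (p - k - 1) *
                ((N : ℝ) + 1) ^ 2 / (((N : ℝ) - (j : ℝ)) + 1) ^ 2) *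
          (β / (|(n : ℝ)| + 1) ^ 2) := by
  intro n hn
  obtain ⟨β', hβ', hc, hcs⟩ := hcX
  have hnpos : (0 : ℤ) < n := by omega
  have hnR : (N : ℝ) ≤ n := by exact_mod_cast hn.le
  have hnabs : |(n : ℝ)| = n := abs_of_pos (by exact_mod_cast hnpos)
  have hterm : ∀ k ∈ Finset.range p, ‖conv (convPow c k) (convPow x (p - k)) n‖ ≤
      (∑ j ∈ Finset.Icc (-(l * k : ℤ)) (l * k : ℤ),
              ‖convPow c k j‖ * (10 * β) ^ (p - k - 1) *
                ((N : ℝ) + 1) ^ 2 / (((N : ℝ) - (j : ℝ)) + 1) ^ 2) *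
          (β / (|(n : ℝ)| + 1) ^ 2) := by
    intro k hk
    have hkp := Finset.mem_range.1 hk
    obtain ⟨m, hm⟩ : ∃ m, p - k = m + 1 := ⟨p - k - 1, by omega⟩
    have hlk : l * k < N := lt_of_le_of_lt (by rw [mul_comm]; gcongr) hN
    have e : conv (convPow c k) (convPow x (p - k)) n =
        ∑ j ∈ Finset.Icc (-(l * k : ℤ)) (l * k : ℤ),
          convPow c k j * convPow x (p - k) (n - j) := by
      refine tsum_eq_sum fun j hj => ?_
      rw [convPow_supp hsupp k j, zero_mul]
      rw [Finset.mem_Icc, ← abs_le] at hj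
      exact not_le.1 hj
    rw [e, hm, Nat.add_sub_cancel]
    have s := sym_sum (fun j => ‖convPow c k j‖) (fun j => norm_nonneg _)
      (fun j => by simp [convPow_symm hcs]) (l * k : ℤ) (M := (n : ℝ) + 1) (P := (N : ℝ) + 1)
      (by linarith) (by
        have : ((l * k : ℕ) : ℝ) < N := by exact_mod_cast hlk
        push_cast at this ⊢
        linarith) (by positivity)
    calc ‖∑ j ∈ Finset.Icc (-(l * k : ℤ)) (l * k : ℤ),
          convPow c k j * convPow x (m + 1) (n - j)‖
        ≤ ∑ j ∈ Finset.Icc (-(l * k : ℤ)) (l * k : ℤ),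
          ((10 * β) ^ m * β) * (‖convPow c k j‖ * (1 / ((n : ℝ) + 1 - j) ^ 2)) := by
          refine norm_sum_le_of_le _ fun j hj => ?_
          rw [norm_mul]
          have hd := convPow_decay hβ hx.1 m (n - j)
          have hjn : j ≤ n := by
            have := (Finset.mem_Icc.1 hj).2
            have h3 : ((l * k : ℕ) : ℤ) < N := by exact_mod_cast hlk
            push_cast at h3
            linarith
          have : |((n - j : ℤ) : ℝ)| = n - j := by
            rw [abs_of_nonneg (by exact_mod_cast sub_nonneg.2 hjn)]; push_cast; ring
          rw [this] at hd
          refine (mul_le_mul_of_nonneg_left hd (norm_nonneg _)).trans (le_of_eq ?_)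
          rw [show (n : ℝ) - j + 1 = n + 1 - j by ring]
          ring
      _ = ((10 * β) ^ m * β) * ∑ j ∈ Finset.Icc (-(l * k : ℤ)) (l * k : ℤ),
            ‖convPow c k j‖ * (1 / ((n : ℝ) + 1 - j) ^ 2) := by rw [Finset.mul_sum]
      _ ≤ ((10 * β) ^ m * β) * _ := mul_le_mul_of_nonneg_left s (by positivity)
      _ = _ := by
        rw [Finset.mul_sum, Finset.sum_mul, hnabs]
        refine Finset.sum_congr rfl fun j _ => ?_
        rw [show (N : ℝ) - j + 1 = N + 1 - j by ring]
        ring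
  have hlast : conv (convPow c p) (convPow x (p - p)) n = 0 := by
    have : convPow x (p - p) = delta := by rw [Nat.sub_self]; rfl
    rw [this, conv_comm', delta_conv]
    apply convPow_supp hsupp
    rw [abs_of_pos hnpos]
    have h3 : ((p * l : ℕ) : ℤ) < N := by exact_mod_cast hN
    push_cast at h3
    linarith
  have hsum : ‖convPow (x + c) p n‖ ≤ (∑ k ∈ Finset.range p, (p.choose k : ℝ) *
            ∑ j ∈ Finset.Icc (-(l * k : ℤ)) (l * k : ℤ),
              ‖convPow c k j‖ * (10 * β) ^ (p - k - 1) *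
                ((N : ℝ) + 1) ^ 2 / (((N : ℝ) - (j : ℝ)) + 1) ^ 2) *
          (β / (|(n : ℝ)| + 1) ^ 2) := by
    rw [convPow_add (decay_summable hx.1) (decay_summable hc), Finset.sum_range_succ, hlast,
      mul_zero, add_zero, Finset.sum_mul]
    refine norm_sum_le_of_le _ fun k hk => ?_
    rw [norm_mul, Complex.norm_natCast, mul_assoc]
    exact mul_le_mul_of_nonneg_left (hterm k hk) (by positivity)
  have hKn : ‖(K / (Nat.factorial p : ℂ))‖ = K / (Nat.factorial p : ℝ) := by
    rw [norm_div, Complex.norm_natCast, Complex.norm_real, Real.norm_of_nonneg hK.le]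
  rw [norm_mul, hKn, mul_assoc]
  exact mul_le_mul_of_nonneg_left hsum (by positivity)
end

section
/- Let K > 0, β > 0, l₀ > 0, and τ̲ ≤ τ̄ be real numbers. Suppose that for each integer l > l₀ there exist c^l ∈ X_β and τ_l ∈ [τ̲, τ̄] such that F(τ_l, c^l)_n = 0 for all |n| ≤ l. Then there exist c⁰ ∈ X_β and τ₀ ∈ [τ̲, τ̄] such that F(τ₀, c⁰)_n = 0 for all n ∈ ℤ. Moreover, if all the c^l lie in a set D ⊆ ℂ^ℤ that is closed in the product topology, then c⁰ can be chosen with c⁰ ∈ D. -/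
open scoped Real
open Complex Filter

/-- The map `F(τ,c)_n = i n τ e^{inτ} c_n + K Σ_k ((-1)^k/(2k+1)!) (c^{*(2k+1)})_n`. -/
noncomputable def Fmap (K τ : ℝ) (c : ℤ → ℂ) : ℤ → ℂ := fun n =>
  Complex.I * n * τ * Complex.exp (Complex.I * n * τ) * c n +
    K * ∑' k : ℕ, ((-1) ^ k / (Nat.factorial (2 * k + 1) : ℂ)) * convPow c (2 * k + 1) n

lemma summable_w (β : ℝ) : Summable (fun n : ℤ => β / (|(n : ℝ)| + 1) ^ 2) := by
  have h : Summable (fun n : ℤ => 1 / |(n:ℝ)| ^ 2) := by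
    have := (Real.summable_one_div_int_pow (p := 2)).2 (by norm_num)
    simpa using this
  have h2 : Summable (fun n : ℤ => 1 / (|(n : ℝ)| + 1) ^ 2) := by
    refine h.of_norm_bounded_eventually ?_
    have : ∀ᶠ n : ℤ in cofinite, n ≠ 0 :=
      (Set.finite_singleton (0 : ℤ)).compl_mem_cofinite
    filter_upwards [this] with n hn
    have : 0 < |(n:ℝ)| := abs_pos.2 (by exact_mod_cast hn)
    rw [Real.norm_of_nonneg (by positivity)]
    gcongr
    linarith
  simpa [div_eq_mul_inv] using h2.mul_left β

lemma convPow_bound_s16 {β : ℝ} {x : ℤ → ℂ} 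
    (hx : ∀ n : ℤ, ‖x n‖ ≤ β / (|(n : ℝ)| + 1) ^ 2) (k : ℕ) (n : ℤ) :
    ‖convPow x k n‖ ≤ (∑' n : ℤ, β / (|(n : ℝ)| + 1) ^ 2) ^ k := by
  induction k generalizing n with
  | zero => simp only [convPow]; split_ifs <;> simp
  | succ k ih =>
    simp only [convPow, conv]
    set S := ∑' n : ℤ, β / (|(n : ℝ)| + 1) ^ 2 with hS
    have hs := (summable_w β).hasSum
    have hs2 : HasSum (fun j : ℤ => S ^ k * (β / (|((n - j : ℤ) : ℝ)| + 1) ^ 2)) (S ^ k * S) :=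
      ((Equiv.subLeft n).hasSum_iff.2 hs).mul_left _
    rw [pow_succ]
    refine tsum_of_norm_bounded hs2 (fun j => ?_)
    rw [norm_mul]
    exact mul_le_mul (ih j) (hx _) (norm_nonneg _) ((norm_nonneg _).trans (ih j))

lemma convPow_tendsto {β : ℝ} {U : Filter ℕ} {c : ℕ → ℤ → ℂ} {c₀ : ℤ → ℂ}
    (hc : ∀ᶠ l in U, ∀ n : ℤ, ‖c l n‖ ≤ β / (|(n : ℝ)| + 1) ^ 2)
    (h : ∀ n, Tendsto (fun l => c l n) U (nhds (c₀ n))) (k : ℕ) (n : ℤ) :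
    Tendsto (fun l => convPow (c l) k n) U (nhds (convPow c₀ k n)) := by
  induction k generalizing n with
  | zero => simp only [convPow]; exact tendsto_const_nhds
  | succ k ih =>
    simp only [convPow, conv]
    set S := ∑' n : ℤ, β / (|(n : ℝ)| + 1) ^ 2 with hS
    have hs2 : Summable (fun j : ℤ => S ^ k * (β / (|((n - j : ℤ) : ℝ)| + 1) ^ 2)) :=
      ((Equiv.subLeft n).summable_iff.2 (summable_w β)).mul_left _
    refine tendsto_tsum_of_dominated_convergence hs2 (fun j => (ih j).mul (h _)) ?_
    filter_upwards [hc] with l hl j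
    rw [norm_mul]
    exact mul_le_mul (convPow_bound_s16 hl k j) (hl _) (norm_nonneg _)
      ((norm_nonneg _).trans (convPow_bound_s16 hl k j))

lemma Fmap_tendsto {K β : ℝ} {U : Filter ℕ} {c : ℕ → ℤ → ℂ} {c₀ : ℤ → ℂ} {τs : ℕ → ℝ} {τ₀ : ℝ}
    (hc : ∀ᶠ l in U, ∀ n : ℤ, ‖c l n‖ ≤ β / (|(n : ℝ)| + 1) ^ 2)
    (h : ∀ n, Tendsto (fun l => c l n) U (nhds (c₀ n)))
    (hτ : Tendsto τs U (nhds τ₀)) (n : ℤ) :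
    Tendsto (fun l => Fmap K (τs l) (c l) n) U (nhds (Fmap K τ₀ c₀ n)) := by
  simp only [Fmap]
  have hτ' : Tendsto (fun l => (τs l : ℂ)) U (nhds (τ₀ : ℂ)) :=
    (Complex.continuous_ofReal.tendsto _).comp hτ
  have h1 : Tendsto (fun l => Complex.I * n * (τs l : ℂ)) U (nhds (Complex.I * n * τ₀)) :=
    hτ'.const_mul _
  refine ((h1.mul ((Complex.continuous_exp.tendsto _).comp h1)).mul (h n)).add
    (Tendsto.const_mul _ ?_)
  set S := ∑' n : ℤ, β / (|(n : ℝ)| + 1) ^ 2 with hS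
  have hs : Summable (fun k : ℕ => S ^ (2 * k + 1) / (Nat.factorial (2 * k + 1) : ℝ)) :=
    (Real.summable_pow_div_factorial S).comp_injective (i := fun k : ℕ => 2 * k + 1)
      (fun a b hab => by simpa using hab)
  refine tendsto_tsum_of_dominated_convergence hs
    (fun k => (convPow_tendsto hc h _ n).const_mul _) ?_
  filter_upwards [hc] with l hl k
  rw [norm_mul, norm_div, norm_pow, norm_neg, norm_one, one_pow, Complex.norm_natCast,
    one_div, div_eq_inv_mul]
  exact mul_le_mul_of_nonneg_left (convPow_bound_s16 hl _ n) (by positivity)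

/-- Lemma `lem:granica`: zeros of all Galerkin projections accumulate to a
zero of `F`; moreover the limit stays in any closed set `D` containing the `c^l`. -/
theorem galerkin_limit (K β : ℝ) (hK : 0 < K) (hβ : 0 < β) (l₀ : ℕ) (hl₀ : 0 < l₀)
    (τlo τhi : ℝ) (hτ : τlo ≤ τhi)
    (c : ℕ → ℤ → ℂ) (τs : ℕ → ℝ)
    (hc : ∀ l : ℕ, l₀ < l → memX β (c l))
    (hτs : ∀ l : ℕ, l₀ < l → τs l ∈ Set.Icc τlo τhi)
    (hzero : ∀ l : ℕ, l₀ < l → ∀ n : ℤ, |n| ≤ (l : ℤ) → Fmap K (τs l) (c l) n = 0)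
    (D : Set (ℤ → ℂ)) (hD : IsClosed D) (hcD : ∀ l : ℕ, l₀ < l → c l ∈ D) :
    ∃ c₀ : ℤ → ℂ, ∃ τ₀ : ℝ, memX β c₀ ∧ τ₀ ∈ Set.Icc τlo τhi ∧
      (∀ n : ℤ, Fmap K τ₀ c₀ n = 0) ∧ c₀ ∈ D := by
  have hU : (hyperfilter ℕ : Filter ℕ) ≤ atTop := by
    rw [← Nat.cofinite_eq_atTop]; exact hyperfilter_le_cofinite
  have hev : ∀ᶠ l in (hyperfilter ℕ : Filter ℕ), l₀ < l := hU (eventually_gt_atTop l₀)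
  have hcv : ∀ n : ℤ, ∃ z : ℂ,
      Tendsto (fun l => c l n) (hyperfilter ℕ : Filter ℕ) (nhds z) := by
    intro n
    obtain ⟨z, -, hz⟩ := (isCompact_closedBall (0 : ℂ)
      (β / (|(n : ℝ)| + 1) ^ 2)).ultrafilter_le_nhds ((hyperfilter ℕ).map (fun l => c l n)) (by
        rw [le_principal_iff]
        change ∀ᶠ l in (hyperfilter ℕ : Filter ℕ), c l n ∈ _
        filter_upwards [hev] with l hl
        simpa using (hc l hl).1 n)
    exact ⟨z, hz⟩
  choose c₀ hc₀ using hcv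
  obtain ⟨τ₀, hτ₀, hτt⟩ := (isCompact_Icc (a := τlo) (b := τhi)).ultrafilter_le_nhds
    ((hyperfilter ℕ).map τs) (by
        rw [le_principal_iff]
        change ∀ᶠ l in (hyperfilter ℕ : Filter ℕ), τs l ∈ _
        filter_upwards [hev] with l hl
        exact hτs l hl)
  have hτt' : Tendsto τs (hyperfilter ℕ : Filter ℕ) (nhds τ₀) := hτt
  have hb : ∀ᶠ l in (hyperfilter ℕ : Filter ℕ), ∀ n : ℤ, ‖c l n‖ ≤ β / (|(n : ℝ)| + 1) ^ 2 := by
    filter_upwards [hev] with l hl using (hc l hl).1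
  refine ⟨c₀, τ₀, ⟨fun n => ?_, fun n => ?_⟩, hτ₀, fun n => ?_, ?_⟩
  · exact le_of_tendsto (hc₀ n).norm (hb.mono fun l hl => hl n)
  · refine tendsto_nhds_unique (hc₀ (-n))
      (((Complex.continuous_conj.tendsto _).comp (hc₀ n)).congr' ?_)
    filter_upwards [hev] with l hl using ((hc l hl).2 n).symm
  · refine tendsto_nhds_unique (Fmap_tendsto hb hc₀ hτt' n) (tendsto_const_nhds.congr' ?_)
    filter_upwards [hev, hU (eventually_ge_atTop n.natAbs)] with l hl hn
    have hn' : n.natAbs ≤ l := hn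
    exact (hzero l hl n (by rw [Int.abs_eq_natAbs]; exact_mod_cast hn')).symm
  · refine hD.mem_of_tendsto (tendsto_pi_nhds.2 hc₀) ?_
    filter_upwards [hev] with l hl using hcD l hl
end
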